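/- arXiv:math/0402227 — 5 statements merged into one kernel-verified Lean document; each statement's English description precedes it below -/
import Mathlib

section
/- Let σ be a Borel measure on the interval (0,1] with σ((0,1)) > 0, and let β* be a real number with ∫_{(0,1]} x^{β*} σ(dx) = 1. Then for every complex number β with Re β > β* one has ∫_{(0,1]} x^{Re β} σ(dx) < ∞ and the strict inequality |∫_{(0,1]} x^{β} σ(dx)| < 1. In particular, β* is the unique real solution of φ(β) = 1, and the equation φ(β) = 1 has no complex solutions with Re β > β*. -/
open MeasureTheory Set

/-- If `σ` is a Borel measure on `(0,1]` with `σ((0,1)) > 0` and `β*` is a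
real number with `∫ x^{β*} dσ = 1` (Malthusian exponent), then for every complex `β` with
`Re β > β*` the integral `∫ x^{Re β} dσ` is finite and `|∫ x^β dσ| < 1`.  In particular `β*`
is the unique real solution of `φ(β) = 1` and there is no complex solution with `Re β > β*`. -/
theorem malthusian_unique_and_no_solutions_to_the_right
    (σ : Measure ℝ) (βs : ℝ)
    (hpos : 0 < σ (Ioo 0 1))
    (hβs : ∫⁻ x in Ioc (0:ℝ) 1, ENNReal.ofReal (x ^ βs) ∂σ = 1) :
    ∀ β : ℂ, βs < β.re →
      (∫⁻ x in Ioc (0:ℝ) 1, ENNReal.ofReal (x ^ β.re) ∂σ) < ⊤ ∧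
      ‖∫ x in Ioc (0:ℝ) 1, (x : ℂ) ^ β ∂σ‖ < 1 := by
  intro β hβ
  have hlt : (∫⁻ x in Ioc (0:ℝ) 1, ENNReal.ofReal (x ^ β.re) ∂σ) < 1 := by
    rw [← hβs]
    have hle : (fun x : ℝ => ENNReal.ofReal (x ^ β.re))
        ≤ᵐ[σ.restrict (Ioc (0:ℝ) 1)] fun x => ENNReal.ofReal (x ^ βs) := by
      filter_upwards [ae_restrict_mem measurableSet_Ioc] with x hx
      exact ENNReal.ofReal_le_ofReal
        (Real.rpow_le_rpow_of_exponent_ge hx.1 hx.2 hβ.le)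
    refine lintegral_strict_mono_of_ae_le_of_ae_lt_on (s := Ioo 0 1) (by fun_prop) ?_ hle ?_ ?_
    · refine ne_top_of_le_ne_top ?_ (lintegral_mono_ae hle)
      rw [hβs]
      exact ENNReal.one_ne_top
    · rw [Measure.restrict_apply measurableSet_Ioo,
        inter_eq_left.2 Ioo_subset_Ioc_self]
      exact hpos.ne'
    · refine Filter.Eventually.of_forall fun x hx => ?_
      exact (ENNReal.ofReal_lt_ofReal_iff (Real.rpow_pos_of_pos hx.1 _)).2
        (Real.rpow_lt_rpow_of_exponent_gt hx.1 hx.2 hβ)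
  refine ⟨hlt.trans ENNReal.one_lt_top, ?_⟩
  have h : ‖∫ x in Ioc (0:ℝ) 1, (x : ℂ) ^ β ∂σ‖ₑ < 1 := by
    refine (enorm_integral_le_lintegral_enorm _).trans_lt (lt_of_eq_of_lt ?_ hlt)
    refine setLIntegral_congr_fun measurableSet_Ioc fun x hx => ?_
    rw [← ofReal_norm, Complex.norm_cpow_eq_rpow_re_of_pos hx.1]
  rw [← ofReal_norm, ENNReal.ofReal_lt_one] at h
  exact h
end

section
/- Let σ be a Borel measure on the interval (0,1] and β* a real number with ∫_{(0,1]} x^{β*} σ(dx) = 1. Suppose that for some real s ≠ 0 the complex number β = β* + i·s also satisfies ∫_{(0,1]} x^{β} σ(dx) = 1. Then σ is arithmetic: with r = exp(−2π/|s|) ∈ (0,1), the measure σ is supported on the geometric sequence {r^n : n = 0, 1, 2, ...}, i.e. σ((0,1] \ {r^n : n ∈ ℕ}) = 0. -/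
open MeasureTheory Set Real

lemma cpow_re_aux (x βs s : ℝ) (hx : 0 < x) :
    ((x : ℂ) ^ ((βs : ℂ) + Complex.I * s)).re = x ^ βs * Real.cos (s * Real.log x) := by
  have hx' : (x : ℂ) ≠ 0 := by exact_mod_cast hx.ne'
  rw [Complex.cpow_def_of_ne_zero hx', ← Complex.ofReal_log hx.le, Complex.exp_re,
    Real.rpow_def_of_pos hx]
  congr 2 <;> simp [mul_comm]

lemma cos_one_aux (x s : ℝ) (hs : s ≠ 0) (hx : 0 < x) (hx1 : x ≤ 1)
    (h : Real.cos (s * Real.log x) = 1) :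
    ∃ n : ℕ, x = Real.exp (-(2 * π) / |s|) ^ n := by
  obtain ⟨k, hk⟩ := (Real.cos_eq_one_iff _).1 h
  refine ⟨k.natAbs, ?_⟩
  rw [← Real.exp_nat_mul]
  have hl : Real.log x ≤ 0 := Real.log_nonpos hx.le hx1
  have h1 : |s| * (-Real.log x) = (k.natAbs : ℝ) * (2 * π) := by
    rw [← abs_of_nonpos hl, ← abs_mul, ← hk, abs_mul, abs_of_pos Real.two_pi_pos,
      Nat.cast_natAbs, Int.cast_abs]
  have h2 : Real.log x = (k.natAbs : ℝ) * (-(2 * π) / |s|) := by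
    have : |s| ≠ 0 := abs_ne_zero.2 hs
    field_simp
    linarith
  rw [← h2, Real.exp_log hx]

/-- If `σ` is a Borel measure on `(0,1]`, `β*` real with `φ(β*) = 1`
(and the integral finite), and `β = β* + i·s` with `s ≠ 0` also satisfies `φ(β) = 1`,
then `σ` is arithmetic: with `r = exp(−2π/|s|)` the measure `σ` is carried by the
geometric sequence `{r^n : n ∈ ℕ}`. -/
theorem complex_malthusian_root_implies_arithmetic
    (σ : Measure ℝ) (βs s : ℝ) (hs : s ≠ 0)
    (hβs : ∫⁻ x in Ioc (0:ℝ) 1, ENNReal.ofReal (x ^ βs) ∂σ = 1)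
    (hβ : ∫ x in Ioc (0:ℝ) 1, (x : ℂ) ^ ((βs : ℂ) + Complex.I * s) ∂σ = 1) :
    σ (Ioc (0:ℝ) 1 \ {y : ℝ | ∃ n : ℕ, y = Real.exp (-(2 * π) / |s|) ^ n}) = 0 := by
  have hmem : ∀ᵐ x ∂(σ.restrict (Ioc (0:ℝ) 1)), x ∈ Ioc (0:ℝ) 1 :=
    ae_restrict_mem measurableSet_Ioc
  have hgm : Measurable (fun x : ℝ => x ^ βs) := by fun_prop
  have hg0 : 0 ≤ᵐ[σ.restrict (Ioc (0:ℝ) 1)] (fun x : ℝ => x ^ βs) := by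
    filter_upwards [hmem] with x hx using Real.rpow_nonneg hx.1.le _
  have hgi : Integrable (fun x : ℝ => x ^ βs) (σ.restrict (Ioc (0:ℝ) 1)) := by
    refine ⟨hgm.aestronglyMeasurable, ?_⟩
    rw [hasFiniteIntegral_iff_ofReal hg0, hβs]
    exact ENNReal.one_lt_top
  have hg1 : ∫ x in Ioc (0:ℝ) 1, x ^ βs ∂σ = 1 := by
    rw [integral_eq_lintegral_of_nonneg_ae hg0 hgm.aestronglyMeasurable, hβs]
    simp
  have hfi : Integrable (fun x : ℝ => (x : ℂ) ^ ((βs : ℂ) + Complex.I * s))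
      (σ.restrict (Ioc (0:ℝ) 1)) := by
    by_contra h
    rw [integral_undef h] at hβ
    exact zero_ne_one hβ
  have hre : ∫ x in Ioc (0:ℝ) 1, ((x : ℂ) ^ ((βs : ℂ) + Complex.I * s)).re ∂σ = 1 := by
    have := integral_re hfi
    simp only [RCLike.re_to_complex] at this
    rw [this, hβ, Complex.one_re]
  have hrei : Integrable (fun x : ℝ => ((x : ℂ) ^ ((βs : ℂ) + Complex.I * s)).re)
      (σ.restrict (Ioc (0:ℝ) 1)) := hfi.re
  have hz : ∫ x in Ioc (0:ℝ) 1,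
      (x ^ βs - ((x : ℂ) ^ ((βs : ℂ) + Complex.I * s)).re) ∂σ = 0 := by
    rw [integral_sub hgi hrei, hg1, hre, sub_self]
  have hdi : Integrable (fun x : ℝ => x ^ βs - ((x : ℂ) ^ ((βs : ℂ) + Complex.I * s)).re)
      (σ.restrict (Ioc (0:ℝ) 1)) := hgi.sub hrei
  rw [integral_eq_zero_iff_of_nonneg_ae ?_ hdi] at hz
  · have key : ∀ᵐ x ∂(σ.restrict (Ioc (0:ℝ) 1)),
        ∃ n : ℕ, x = Real.exp (-(2 * π) / |s|) ^ n := by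
      filter_upwards [hmem, hz] with x hx h
      simp only [Pi.zero_apply] at h
      rw [cpow_re_aux x βs s hx.1] at h
      have hp := Real.rpow_pos_of_pos hx.1 βs
      refine cos_one_aux x s hs hx.1 hx.2 (mul_left_cancel₀ hp.ne' ?_)
      linarith
    rw [ae_restrict_iff' measurableSet_Ioc] at key
    refine measure_mono_null ?_ (ae_iff.1 key)
    rintro x ⟨hx, hn⟩
    exact fun h => hn (h hx)
  · filter_upwards [hmem] with x hx
    simp only [Pi.zero_apply]
    rw [cpow_re_aux x βs s hx.1]
    have hp := Real.rpow_pos_of_pos hx.1 βs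
    nlinarith [Real.cos_le_one (s * Real.log x)]
end

section
/- Let σ be a Borel measure on (0,1], α > 0, and β a complex number with ∫_{(0,1]} x^{Re β} σ(dx) < ∞. Then the entire function m(t,β) = Σ_{n=0}^∞ ((−t)^n/n!)·∏_{k=0}^{n−1} ψ(β+αk) satisfies m(0,β) = 1 and, for every real t ≥ 0, the function x ↦ m(x^α t, β)·x^β is σ-integrable on (0,1] and ∂_t m(t,β) = −m(t,β) + ∫_{(0,1]} m(x^α t, β)·x^β σ(dx); that is, m(·,β) solves the Cauchy problem for the integro-differential equation of the mean β-power sums of the self-similar fragmentation. -/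
open MeasureTheory Set

/-- Bounded-coefficient exponential-type series: summability. -/
lemma aux_summable (c : ℕ → ℂ) (C : ℝ) (hc : ∀ n, ‖c n‖ ≤ C ^ n) (t : ℂ) :
    Summable (fun n : ℕ => (-t) ^ n / (n.factorial : ℂ) * c n) := by
  refine Summable.of_norm_bounded (g := fun n : ℕ => (‖t‖ * C) ^ n / (n.factorial : ℝ))
    (Real.summable_pow_div_factorial _) (fun n => ?_)
  rw [norm_mul, norm_div, norm_pow, norm_neg, Complex.norm_natCast, mul_pow, div_mul_eq_mul_div]
  gcongr
  exact hc n

lemma aux_norm (c : ℕ → ℂ) (C : ℝ) (hc : ∀ n, ‖c n‖ ≤ C ^ n) (t : ℂ) :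
    ‖∑' n : ℕ, (-t) ^ n / (n.factorial : ℂ) * c n‖ ≤ Real.exp (‖t‖ * C) := by
  have h := NormedSpace.expSeries_div_hasSum_exp (‖t‖ * C)
  rw [← Real.exp_eq_exp_ℝ] at h
  refine tsum_of_norm_bounded h (fun n => ?_)
  rw [norm_mul, norm_div, norm_pow, norm_neg, Complex.norm_natCast, mul_pow, div_mul_eq_mul_div]
  gcongr
  exact hc n

lemma aux_deriv (c : ℕ → ℂ) (C : ℝ) (hC : 0 ≤ C) (hc : ∀ n, ‖c n‖ ≤ C ^ n) (t : ℂ) :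
    HasDerivAt (fun t : ℂ => ∑' n : ℕ, (-t) ^ n / (n.factorial : ℂ) * c n)
      (-∑' n : ℕ, (-t) ^ n / (n.factorial : ℂ) * c (n + 1)) t := by
  set R := ‖t‖ + 1 with hR
  have hR0 : 0 ≤ R := by positivity
  have hsum : Summable (fun n : ℕ => (n : ℝ) * R ^ (n - 1) / (n.factorial : ℝ) * C ^ n) := by
    rw [← summable_nat_add_iff 1]
    refine ((Real.summable_pow_div_factorial (R * C)).mul_right C).congr (fun n => ?_)
    rw [Nat.factorial_succ, Nat.add_sub_cancel]
    have := Nat.factorial_ne_zero n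
    push_cast
    field_simp
    ring
  have key := hasDerivAt_tsum_of_isPreconnected (𝕜 := ℂ)
    (g := fun (n : ℕ) (t : ℂ) => (-t) ^ n / (n.factorial : ℂ) * c n)
    (g' := fun (n : ℕ) (t : ℂ) => ((n : ℂ) * (-t) ^ (n - 1) * (-1)) / (n.factorial : ℂ) * c n)
    hsum (t := Metric.ball 0 R) Metric.isOpen_ball (convex_ball 0 R).isPreconnected
    (fun n y _ => by
      exact ((((hasDerivAt_id y).neg).pow n).div_const _).mul_const _)
    (fun n y hy => by
      have hy' : ‖y‖ ≤ R := by simpa using (mem_ball_zero_iff.1 hy).le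
      rw [norm_mul, norm_div, norm_mul, norm_mul, norm_pow, norm_neg, norm_neg, norm_one,
        Complex.norm_natCast, Complex.norm_natCast, mul_one]
      gcongr
      exact hc n)
    (y₀ := 0) (y := t) (by simp [hR]; positivity) (aux_summable c C hc 0)
    (by simp [hR])
  refine key.congr_deriv (Eq.symm ?_)
  have hs : Summable (fun n : ℕ => ((n : ℂ) * (-t) ^ (n - 1) * (-1)) / (n.factorial : ℂ) * c n) := by
    refine Summable.of_norm_bounded hsum (fun n => ?_)
    have hy' : ‖t‖ ≤ R := by simp [hR]
    rw [norm_mul, norm_div, norm_mul, norm_mul, norm_pow, norm_neg, norm_neg, norm_one,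
      Complex.norm_natCast, Complex.norm_natCast, mul_one]
    gcongr
    exact hc n
  rw [hs.tsum_eq_zero_add, ← tsum_neg]
  simp only [Nat.cast_zero, zero_mul, zero_div, zero_add]
  refine tsum_congr (fun n => ?_)
  rw [Nat.factorial_succ, Nat.add_sub_cancel]
  have : (n.factorial : ℂ) ≠ 0 := by exact_mod_cast Nat.factorial_ne_zero n
  have : (n : ℂ) + 1 ≠ 0 := by exact_mod_cast Nat.succ_ne_zero n
  push_cast
  field_simp


open MeasureTheory Set

/-- The Mellin transform (characteristic function) `φ(w) = ∫_{(0,1]} x^w σ(dx)`. -/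
noncomputable def mellin' (σ : Measure ℝ) (w : ℂ) : ℂ :=
  ∫ x in Ioc (0:ℝ) 1, (x : ℂ) ^ w ∂σ

/-- `ψ = 1 − φ`. -/
noncomputable def psi' (σ : Measure ℝ) (w : ℂ) : ℂ := 1 - mellin' σ w

/-- The entire function `m(t,β) = Σ_n ((−t)^n/n!)·γ(n,β)`, `γ(n,β) = ∏_{k<n} ψ(β+αk)`. -/
noncomputable def mSeries (σ : Measure ℝ) (α : ℝ) (β : ℂ) (t : ℂ) : ℂ :=
  ∑' n : ℕ, (-t) ^ n / (n.factorial : ℂ) * ∏ k ∈ Finset.range n, psi' σ (β + (α : ℂ) * k)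

/-- The power series `m(·,β)` satisfies `m(0,β) = 1` and, for every real
`t ≥ 0`, the function `x ↦ m(x^α t, β)·x^β` is `σ`-integrable on `(0,1]` and
`∂_t m(t,β) = −m(t,β) + ∫_{(0,1]} m(x^α t, β)·x^β σ(dx)`:
the Cauchy problem for the mean power sums of the self-similar fragmentation. -/
theorem mean_power_sum_solves_integro_differential_equation
    (σ : Measure ℝ) (α : ℝ) (hα : 0 < α) (β : ℂ)
    (hβ : ∫⁻ x in Ioc (0:ℝ) 1, ENNReal.ofReal (x ^ β.re) ∂σ < ⊤) :
    mSeries σ α β 0 = 1 ∧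
    ∀ t : ℝ, 0 ≤ t →
      IntegrableOn (fun x : ℝ => mSeries σ α β ((x ^ α * t : ℝ) : ℂ) * (x : ℂ) ^ β)
        (Ioc (0:ℝ) 1) σ ∧
      HasDerivAt (fun s : ℝ => mSeries σ α β (s : ℂ))
        (-mSeries σ α β (t : ℂ)
          + ∫ x in Ioc (0:ℝ) 1, mSeries σ α β ((x ^ α * t : ℝ) : ℂ) * (x : ℂ) ^ β ∂σ) t := by

  have hmeas : ∀ w : ℂ, Measurable (fun x : ℝ => (x : ℂ) ^ w) := fun w =>
    Complex.measurable_ofReal.pow_const w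
  have hpow : ∀ k : ℕ, IntegrableOn (fun x : ℝ => x ^ β.re) (Ioc (0:ℝ) 1) σ := fun k => by
    refine ⟨(measurable_id.pow_const β.re).aestronglyMeasurable, ?_⟩
    rw [hasFiniteIntegral_iff_norm]
    refine lt_of_le_of_lt (le_of_eq ?_) hβ
    refine setLIntegral_congr_fun measurableSet_Ioc (fun x hx => ?_)
    rw [Real.norm_of_nonneg (Real.rpow_nonneg hx.1.le _)]
  have hpow := hpow 0
  have hle : ∀ (k : ℕ) (x : ℝ), x ∈ Ioc (0:ℝ) 1 →
      ‖(x : ℂ) ^ (β + (α : ℂ) * k)‖ ≤ x ^ β.re := fun k x hx => by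
    rw [Complex.norm_cpow_eq_rpow_re_of_pos hx.1]
    refine Real.rpow_le_rpow_of_exponent_ge hx.1 hx.2 ?_
    simp
    positivity
  have hint : ∀ k : ℕ, IntegrableOn (fun x : ℝ => (x : ℂ) ^ (β + (α : ℂ) * k)) (Ioc (0:ℝ) 1) σ :=
    fun k => Integrable.mono' hpow (hmeas _).aestronglyMeasurable
      ((ae_restrict_iff' measurableSet_Ioc).2 (Filter.Eventually.of_forall (hle k)))
  set M := ∫ x in Ioc (0:ℝ) 1, x ^ β.re ∂σ with hM
  have hM0 : 0 ≤ M := setIntegral_nonneg measurableSet_Ioc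
    (fun x hx => Real.rpow_nonneg hx.1.le _)
  have hnormint : ∀ k : ℕ, ∫ x in Ioc (0:ℝ) 1, ‖(x : ℂ) ^ (β + (α : ℂ) * k)‖ ∂σ ≤ M := fun k =>
    setIntegral_mono_on (hint k).norm hpow measurableSet_Ioc (hle k)
  have hphi : ∀ k : ℕ, ‖mellin' σ (β + (α : ℂ) * k)‖ ≤ M := fun k =>
    (norm_integral_le_integral_norm _).trans (hnormint k)
  set C := 1 + M with hC
  have hC0 : 0 ≤ C := by positivity
  have hpsi : ∀ k : ℕ, ‖psi' σ (β + (α : ℂ) * k)‖ ≤ C := fun k => by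
    unfold psi'
    refine (norm_sub_le _ _).trans ?_
    rw [norm_one]
    linarith [hphi k]
  set c : ℕ → ℂ := fun n => ∏ k ∈ Finset.range n, psi' σ (β + (α : ℂ) * k) with hcdef
  have hc : ∀ n, ‖c n‖ ≤ C ^ n := fun n => by
    rw [hcdef]
    simp only
    rw [norm_prod]
    refine (Finset.prod_le_prod (fun _ _ => norm_nonneg _) (fun k _ => hpsi k)).trans ?_
    simp
  have hm : mSeries σ α β = fun t : ℂ => ∑' n : ℕ, (-t) ^ n / (n.factorial : ℂ) * c n := rfl
  have hder := aux_deriv c C hC0 hc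
  have hcont : Continuous (mSeries σ α β) := by
    rw [hm]
    exact continuous_iff_continuousAt.2 (fun t => (hder t).continuousAt)
  refine ⟨?_, fun t ht => ⟨?_, ?_⟩⟩
  · rw [hm]
    simp only
    rw [tsum_eq_single 0]
    · simp [hcdef]
    · intro n hn
      simp [hn]
  · have hb := hint 0
    simp only [Nat.cast_zero, mul_zero, add_zero] at hb
    refine Integrable.bdd_mul (c := Real.exp (t * C)) hb ?_ ?_
    · refine (hcont.measurable.comp ?_).aestronglyMeasurable
      exact Complex.measurable_ofReal.comp ((measurable_id.pow_const α).mul_const t)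
    · refine (ae_restrict_iff' measurableSet_Ioc).2 (Filter.Eventually.of_forall fun x hx => ?_)
      refine (aux_norm c C hc _).trans ?_
      have h0 : 0 ≤ x ^ α := Real.rpow_nonneg hx.1.le _
      have h1 : x ^ α ≤ 1 := Real.rpow_le_one hx.1.le hx.2 hα.le
      rw [Complex.norm_real, Real.norm_of_nonneg (by positivity)]
      gcongr
      exact mul_le_of_le_one_left ht h1
  · have hd := (hder (t : ℂ)).comp_ofReal
    refine hd.congr_deriv ?_
    set F : ℕ → ℝ → ℂ := fun n x =>
      ((-(t : ℂ)) ^ n / (n.factorial : ℂ) * c n) * (x : ℂ) ^ (β + (α : ℂ) * n) with hF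
    have hFint : ∀ n, Integrable (F n) (σ.restrict (Ioc (0:ℝ) 1)) := fun n =>
      (hint n).const_mul _
    have hs := aux_summable c C hc (t : ℂ)
    have hFsum : Summable (fun n => ∫ x in Ioc (0:ℝ) 1, ‖F n x‖ ∂σ) := by
      refine Summable.of_nonneg_of_le (fun n => integral_nonneg fun x => norm_nonneg _)
        (fun n => ?_) (hs.norm.mul_right M)
      simp only [hF, norm_mul _ (_ ^ (_ + _ : ℂ))]
      rw [integral_const_mul]
      exact mul_le_mul_of_nonneg_left (hnormint n) (norm_nonneg _)
    have hI := hasSum_integral_of_summable_integral_norm hFint hFsum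
    have hIeq : ∫ x in Ioc (0:ℝ) 1, mSeries σ α β ((x ^ α * t : ℝ) : ℂ) * (x : ℂ) ^ β ∂σ
        = ∫ x in Ioc (0:ℝ) 1, ∑' n, F n x ∂σ := by
      refine setIntegral_congr_fun measurableSet_Ioc (fun x hx => ?_)
      simp only [hm, hF]
      rw [← tsum_mul_right]
      refine tsum_congr (fun n => ?_)
      have hx0 : (x : ℂ) ≠ 0 := by exact_mod_cast hx.1.ne'
      rw [Complex.cpow_add _ _ hx0, Complex.cpow_mul_nat, Complex.ofReal_mul,
        Complex.ofReal_cpow hx.1.le, neg_pow, mul_pow, neg_pow (t : ℂ)]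
      ring
    rw [hIeq, ← hI.tsum_eq, hm]
    simp only
    rw [← tsum_neg, ← tsum_neg, ← hs.neg.tsum_add hI.summable]
    refine tsum_congr (fun n => ?_)
    simp only [hF]
    rw [integral_const_mul]
    change _ = _ + _ * mellin' σ (β + (α : ℂ) * n)
    have : c (n + 1) = c n * (1 - mellin' σ (β + (α : ℂ) * n)) := Finset.prod_range_succ _ _
    rw [this]
    ring
end

section
/- Let σ be a nonarithmetic Borel measure on (0,1] with σ((0,1]) > 1 and σ({1}) < 1, let α > 0, and assume there is a Malthusian exponent β* > 0, i.e. φ(β*) = 1, with β* > β_a. Then for every integer k ≥ 1, lim_{t→∞} t^{k} · m(t, β* + αk) = ((k−1)!/(α·ψ'(β*))) · ∏_{j=1}^{k−1} ψ(β* + αj)^{−1}, where ψ'(β*) = ∫_{(0,1]} (−log x)·x^{β*} σ(dx) (and all the factors ψ(β*+αj) are strictly positive). -/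
open MeasureTheory Set Filter

/-- The real Mellin transform `φ(b) = ∫_{(0,1]} x^b σ(dx)`. -/
noncomputable def mellinR (σ : Measure ℝ) (b : ℝ) : ℝ :=
  ∫ x in Ioc (0:ℝ) 1, x ^ b ∂σ

/-- `ψ = 1 − φ`. -/
noncomputable def psiR (σ : Measure ℝ) (b : ℝ) : ℝ := 1 - mellinR σ b

/-- The entire function `m(t,β) = Σ_n ((−t)^n/n!)·∏_{k<n} ψ(β+αk)`, real version. -/
noncomputable def mSeriesR (σ : Measure ℝ) (α : ℝ) (β : ℝ) (t : ℝ) : ℝ :=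
  ∑' n : ℕ, (-t) ^ n / (n.factorial : ℝ) * ∏ k ∈ Finset.range n, psiR σ (β + α * k)

/-- `σ` is arithmetic if it is carried by a geometric sequence `{r^n : n ∈ ℕ}`, `r ∈ (0,1)`. -/
def IsArithmeticMeasure (σ : Measure ℝ) : Prop :=
  ∃ r ∈ Ioo (0:ℝ) 1, σ (Ioc (0:ℝ) 1 \ {y : ℝ | ∃ n : ℕ, y = r ^ n}) = 0


namespace RenewalAux
open Topology

/-- asymptotic density of the additive monoid generated by a nonlattice set -/
lemma asymp_dense (S : Set ℝ) (hS : ∀ y ∈ S, 0 ≤ y)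
    (hn : ∀ d : ℝ, 0 < d → ¬ S ⊆ {y | ∃ n : ℕ, y = n * d}) (ε : ℝ) (hε : 0 < ε) :
    ∃ R : ℝ, ∀ y, R ≤ y → ∃ z ∈ AddSubmonoid.closure S, |y - z| ≤ ε := by
  have hpos : ∀ z ∈ AddSubmonoid.closure S, (0:ℝ) ≤ z := by
    intro z hz
    induction hz using AddSubmonoid.closure_induction with
    | mem x hx => exact hS x hx
    | zero => exact le_rfl
    | add x y _ _ hx hy => exact add_nonneg hx hy
  have hdiff : ∀ z ∈ AddSubgroup.closure S, ∃ a ∈ AddSubmonoid.closure S,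
      ∃ b ∈ AddSubmonoid.closure S, z = a - b := by
    intro z hz
    induction hz using AddSubgroup.closure_induction with
    | mem x hx => exact ⟨x, AddSubmonoid.subset_closure hx, 0, zero_mem _, by simp⟩
    | zero => exact ⟨0, zero_mem _, 0, zero_mem _, by simp⟩
    | add x y _ _ hx hy =>
      obtain ⟨a, ha, b, hb, rfl⟩ := hx
      obtain ⟨a', ha', b', hb', rfl⟩ := hy
      exact ⟨a + a', add_mem ha ha', b + b', add_mem hb hb', by ring⟩
    | neg x _ hx =>
      obtain ⟨a, ha, b, hb, rfl⟩ := hx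
      exact ⟨b, hb, a, ha, by ring⟩
  have hdense : Dense (AddSubgroup.closure S : Set ℝ) := by
    rcases AddSubgroup.dense_or_cyclic (AddSubgroup.closure S) with h | ⟨d, hd⟩
    · exact h
    · exfalso
      have key : ∀ y ∈ S, ∃ n : ℤ, y = n * d := by
        intro y hy
        have : y ∈ AddSubgroup.closure S := AddSubgroup.subset_closure hy
        rw [hd, AddSubgroup.mem_closure_singleton] at this
        obtain ⟨n, hn⟩ := this
        exact ⟨n, by rw [← hn]; simp⟩
      by_cases hd0 : d = 0
      · apply hn 1 one_pos
        intro y hy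
        obtain ⟨n, hn⟩ := key y hy
        exact ⟨0, by simp [hn, hd0]⟩
      · apply hn |d| (abs_pos.2 hd0)
        intro y hy
        obtain ⟨n, hn⟩ := key y hy
        refine ⟨n.natAbs, ?_⟩
        rw [Nat.cast_natAbs, Int.cast_abs, ← abs_mul, ← hn, abs_of_nonneg (hS y hy)]
  obtain ⟨g, hg, hgS⟩ := hdense.exists_mem_open isOpen_Ioo (nonempty_Ioo.2 hε)
  obtain ⟨a, ha, b, hb, rfl⟩ := hdiff g (by simpa using hg)
  have hb0 := hpos b hb
  set g := a - b with hgdef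
  have hg0 : 0 < g := hgS.1
  have hapos : 0 < a := by linarith
  obtain ⟨N, hN⟩ := exists_nat_ge ((a + b) / g)
  rw [div_le_iff₀ hg0] at hN
  have hc : 0 < a + b := by linarith
  refine ⟨N * (a + b), fun y hy => ?_⟩
  set n := ⌊y / (a + b)⌋₊ with hndef
  have hy0 : 0 ≤ y := le_trans (by positivity) hy
  have h1 : (n : ℝ) * (a + b) ≤ y := by
    rw [← le_div_iff₀ hc]; exact Nat.floor_le (by positivity)
  have h2 : y < (n + 1 : ℝ) * (a + b) := by
    rw [← div_lt_iff₀ hc]; exact Nat.lt_floor_add_one _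
  have hNn : N ≤ n := by
    apply Nat.le_floor; rwa [le_div_iff₀ hc]
  have hNn' : (N : ℝ) ≤ n := by exact_mod_cast hNn
  set i := ⌊(y - n * (a + b)) / g⌋₊ with hidef
  have h3 : (i : ℝ) * g ≤ y - n * (a + b) := by
    rw [← le_div_iff₀ hg0]
    exact Nat.floor_le (div_nonneg (by linarith) hg0.le)
  have h4 : y - n * (a + b) < (i + 1 : ℝ) * g := by
    rw [← div_lt_iff₀ hg0]; exact Nat.lt_floor_add_one _
  have hin : i ≤ n := by
    have : (i : ℝ) * g ≤ n * g := by nlinarith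
    exact_mod_cast le_of_mul_le_mul_right this hg0
  refine ⟨i • (a + a) + (n - i) • (b + a), add_mem (nsmul_mem (add_mem ha ha) _)
    (nsmul_mem (add_mem hb ha) _), ?_⟩
  have : (i • (a + a) + (n - i) • (b + a) : ℝ) = n * (a + b) + i * g := by
    simp only [nsmul_eq_mul, Nat.cast_sub hin, hgdef]; ring
  rw [this, abs_le]
  have := hgS.2
  constructor <;> nlinarith

variable {q : Measure ℝ}

lemma shift_step [IsProbabilityMeasure q] {G h : ℝ → ℝ} {C L η : ℝ}
    (hGc : Continuous G) (hGb : ∀ u, |G u| ≤ C) (hL0 : 0 < L)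
    (hL : ∀ u v, |G u - G v| ≤ L * |u - v|)
    (hh : Tendsto h atTop (𝓝 0)) (heq : ∀ u, G u = (∫ y, G (u - y) ∂q) + h u)
    (hη : ∀ ε > 0, ∀ᶠ u in atTop, G u ≤ η + ε)
    {l : Filter ℝ} [l.NeBot] [l.IsCountablyGenerated] {v : ℝ → ℝ} (hv : Tendsto v l atTop)
    (hvG : Tendsto (fun i => G (v i)) l (𝓝 η)) {y₀ : ℝ} (hy₀ : y₀ ∈ q.support) :
    Tendsto (fun i => G (v i - y₀)) l (𝓝 η) := by
  have hIntg : ∀ w, Integrable (fun y => G (w - y)) q := fun w =>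
    Integrable.of_bound (by fun_prop) C (ae_of_all _ fun y => by simpa using hGb _)
  have hD : Tendsto (fun i => ∫ y, max (G (v i - y) - η) 0 ∂q) l (𝓝 0) := by
    have := tendsto_integral_filter_of_dominated_convergence (μ := q) (l := l)
      (F := fun i y => max (G (v i - y) - η) 0) (f := fun _ => 0) (fun _ => C + |η|)
      (Eventually.of_forall fun i => by fun_prop)
      (Eventually.of_forall fun i => ae_of_all _ fun y => by
        rw [Real.norm_eq_abs, abs_of_nonneg (le_max_right _ _)]
        have := abs_le.1 (hGb (v i - y)); have := neg_abs_le η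
        have := abs_nonneg η
        apply max_le <;> linarith [this])
      (integrable_const _)
      (ae_of_all _ fun y => by
        rw [Metric.tendsto_nhds]
        intro ε hε
        have hvy : Tendsto (fun i => v i - y) l atTop := tendsto_atTop_add_const_right l (-y) hv
        filter_upwards [hvy.eventually (hη (ε/2) (by positivity))] with i hi
        rw [Real.dist_eq, sub_zero, abs_of_nonneg (le_max_right _ _)]
        apply max_lt <;> linarith)
    simpa using this
  have hI : Tendsto (fun i => ∫ y, |G (v i - y) - η| ∂q) l (𝓝 0) := by
    have e : ∀ i, ∫ y, |G (v i - y) - η| ∂q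
        = 2 * (∫ y, max (G (v i - y) - η) 0 ∂q) + (η - G (v i) + h (v i)) := by
      intro i
      have e1 : ∀ y, |G (v i - y) - η| = 2 * max (G (v i - y) - η) 0 + (η - G (v i - y)) := by
        intro y
        rcases le_total 0 (G (v i - y) - η) with h | h
        · rw [abs_of_nonneg h, max_eq_left h]; ring
        · rw [abs_of_nonpos h, max_eq_right h]; ring
      simp_rw [e1]
      have i1 : Integrable (fun y => max (G (v i - y) - η) 0) q :=
        ((hIntg _).sub (integrable_const η)).pos_part
      have i2 : Integrable (fun y => η - G (v i - y)) q := (integrable_const η).sub (hIntg _)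
      rw [integral_add (i1.const_mul 2) i2, integral_const_mul, integral_sub (integrable_const η) (hIntg _)]
      have := heq (v i)
      simp
      linarith
    simp_rw [e]
    have := (hD.const_mul 2).add ((tendsto_const_nhds (x := η)).sub hvG |>.add (hh.comp hv))
    simpa using this
  rw [Metric.tendsto_nhds]
  intro ε hε
  set δ := ε / (2 * L) with hδ
  have hδ0 : 0 < δ := by positivity
  have hq : 0 < q (Metric.ball y₀ δ) :=
    (Measure.mem_support_iff_forall _).1 hy₀ _ (Metric.ball_mem_nhds _ hδ0)
  have hqr : 0 < q.real (Metric.ball y₀ δ) := by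
    rw [Measure.real, ENNReal.toReal_pos_iff]; exact ⟨hq, measure_lt_top _ _⟩
  filter_upwards [hI.eventually (gt_mem_nhds (show 0 < q.real (Metric.ball y₀ δ) * (ε/2) by positivity))]
    with i hi
  by_contra hcon
  rw [Real.dist_eq, not_lt] at hcon
  have hi1 : Integrable (fun y => |G (v i - y) - η|) q := ((hIntg _).sub (integrable_const η)).abs
  have : q.real (Metric.ball y₀ δ) * (ε/2) ≤ ∫ y, |G (v i - y) - η| ∂q := by
    calc q.real (Metric.ball y₀ δ) * (ε/2) = ∫ y in Metric.ball y₀ δ, (ε/2) ∂q := by simp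
      _ ≤ ∫ y in Metric.ball y₀ δ, |G (v i - y) - η| ∂q := by
        apply setIntegral_mono_on (integrableOn_const (measure_ne_top _ _)) hi1.integrableOn
          Metric.isOpen_ball.measurableSet
        intro y hy
        rw [Metric.mem_ball, Real.dist_eq] at hy
        have h1 := hL (v i - y₀) (v i - y)
        have h2 : |v i - y₀ - (v i - y)| = |y - y₀| := by congr 1; ring
        rw [h2] at h1
        have h3 : L * |y - y₀| ≤ ε / 2 := by
          calc L * |y - y₀| ≤ L * δ := by gcongr
            _ = ε/2 := by rw [hδ]; field_simp
        have h4 := abs_sub_abs_le_abs_sub (G (v i - y₀) - η) (G (v i - y) - η)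
        have h5 : G (v i - y₀) - η - (G (v i - y) - η) = G (v i - y₀) - G (v i - y) := by ring
        rw [h5] at h4
        linarith
      _ ≤ _ := setIntegral_le_integral hi1 (ae_of_all _ fun y => abs_nonneg _)
  linarith

lemma eta_eq [IsProbabilityMeasure q] {G h K : ℝ → ℝ} {C L η H : ℝ}
    (hq0 : q (Iio 0) = 0) (hqi : Integrable (fun y => y) q)
    (hnl : ∀ d : ℝ, 0 < d → q {y | ∃ n : ℕ, y = n * d}ᶜ ≠ 0)
    (hGc : Continuous G) (hGb : ∀ u, |G u| ≤ C) (hL0 : 0 < L)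
    (hL : ∀ u v, |G u - G v| ≤ L * |u - v|)
    (hh : Tendsto h atTop (𝓝 0)) (heq : ∀ u, G u = (∫ y, G (u - y) ∂q) + h u)
    (hK : ∀ u, HasDerivAt K (G u) u)
    (hJ : Tendsto (fun u => ∫ y, (K u - K (u - y)) ∂q) atTop (𝓝 H))
    (hη : ∀ ε > 0, ∀ᶠ u in atTop, G u ≤ η + ε)
    (hcl : MapClusterPt η atTop G) : η * (∫ y, y ∂q) = H := by
  set μ := ∫ y, y ∂q with hμ
  have hae0 : ∀ᵐ y ∂q, 0 ≤ y := by
    rw [ae_iff]; simpa [Iio] using hq0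
  have hμ0 : 0 ≤ μ := integral_nonneg_of_ae hae0
  have hS0 : ∀ y ∈ q.support, 0 ≤ y := by
    have := Measure.support_subset_of_isClosed (μ := q) (isClosed_Ici (a := (0:ℝ))) hae0
    exact fun y hy => this hy
  have hS1 : ∀ d : ℝ, 0 < d → ¬ q.support ⊆ {y | ∃ n : ℕ, y = n * d} := by
    intro d hd hsub
    exact hnl d hd (measure_mono_null (compl_subset_compl.2 hsub) Measure.measure_compl_support)
  set l : Filter ℝ := atTop ⊓ comap G (𝓝 η) with hl
  have : l.NeBot := by
    have : (𝓝 η ⊓ map G atTop).NeBot := hcl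
    rw [hl, ← map_neBot_iff G, Filter.push_pull, inf_comm]
    exact this
  have hid : Tendsto (fun v : ℝ => v) l atTop := inf_le_left
  have hG : Tendsto (fun v : ℝ => G v) l (𝓝 η) := by
    rw [hl]; exact tendsto_comap.mono_left inf_le_right
  have hsh : ∀ z ∈ AddSubmonoid.closure q.support, Tendsto (fun v => G (v - z)) l (𝓝 η) := by
    intro z hz
    induction hz using AddSubmonoid.closure_induction_left with
    | zero => simpa using hG
    | add_left x hx y hy ih =>
      have := shift_step hGc hGb hL0 hL hh heq hη
        (tendsto_atTop_add_const_right l (-y) hid) ih hx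
      refine this.congr fun v => ?_
      congr 1; ring
  -- the integrated identity
  have hJw : ∀ ε > 0, |H - η * μ| ≤ L * ε * μ := by
    intro ε hε
    obtain ⟨R, hR⟩ := asymp_dense q.support hS0 hS1 (ε/2) (by positivity)
    have hev : ∀ s, 0 ≤ s → ∀ᶠ v in l, |G (v - R - s) - η| ≤ L * ε := by
      intro s hs
      obtain ⟨z, hz, hzs⟩ := hR (R + s) (by linarith)
      filter_upwards [(hsh z hz).eventually (Metric.ball_mem_nhds η (show 0 < L * (ε/2) by positivity))]
        with v hv
      rw [Real.dist_eq] at hv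
      have h1 := hL (v - R - s) (v - z)
      have h2 : |v - R - s - (v - z)| = |R + s - z| := by rw [abs_sub_comm]; congr 1; ring
      rw [h2] at h1
      have h3 : L * |R + s - z| ≤ L * (ε/2) := by gcongr
      have h4 := abs_sub_le (G (v - R - s)) (G (v - z)) η
      linarith
    have hKc : Continuous K := continuous_iff_continuousAt.2 fun u => (hK u).continuousAt
    have hKd : ∀ w y, K w - K (w - y) = ∫ s in (0:ℝ)..y, G (w - s) := by
      intro w y
      rw [intervalIntegral.integral_comp_sub_left (fun s => G s) w, sub_zero]
      exact (intervalIntegral.integral_eq_sub_of_hasDerivAt (fun u _ => hK u)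
        (hGc.intervalIntegrable _ _)).symm
    have hC0 : 0 ≤ C := (abs_nonneg _).trans (hGb 0)
    have hKb : ∀ w y, |K w - K (w - y)| ≤ C * |y| := by
      intro w y
      rw [hKd]
      have := intervalIntegral.norm_integral_le_of_norm_le_const (a := (0:ℝ)) (b := y) (C := C)
        (f := fun s => G (w - s)) (fun s _ => hGb _)
      simpa using this
    have hBint : ∀ w, Integrable (fun y => K w - K (w - y)) q := fun w =>
      (hqi.abs.const_mul C).mono' (by fun_prop) (ae_of_all _ fun y => hKb w y)
    set B : ℝ → ℝ → ℝ := fun v y => max (|K (v - R) - K (v - R - y) - η * y| - L * ε * |y|) 0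
      with hB
    have hBb : ∀ v y, ‖B v y‖ ≤ (C + |η|) * |y| := by
      intro v y
      rw [Real.norm_eq_abs, abs_of_nonneg (le_max_right _ _)]
      have h1 := hKb (v - R) y
      have h2 := abs_sub (K (v - R) - K (v - R - y)) (η * y)
      rw [abs_mul] at h2
      apply max_le
      · have : 0 ≤ L * ε * |y| := by positivity
        linarith
      · positivity
    have hBt : Tendsto (fun v => ∫ y, B v y ∂q) l (𝓝 0) := by
      have := tendsto_integral_filter_of_dominated_convergence (μ := q) (l := l)
        (F := B) (f := fun _ => 0) (fun y => (C + |η|) * |y|)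
        (Eventually.of_forall fun i => by fun_prop)
        (Eventually.of_forall fun i => ae_of_all _ fun y => hBb i y)
        (hqi.abs.const_mul _) ?_
      · simpa using this
      filter_upwards [hae0] with y hy
      -- inner dominated convergence
      set A : ℝ → ℝ → ℝ := fun v s => max (|G (v - R - s) - η| - L * ε) 0 with hA
      have hAt : Tendsto (fun v => ∫ s in (0:ℝ)..y, A v s) l (𝓝 0) := by
        have := intervalIntegral.tendsto_integral_filter_of_dominated_convergence
          (μ := volume) (a := (0:ℝ)) (b := y) (l := l)
          (F := A) (f := fun _ => 0) (fun _ => C + |η|)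
          (Eventually.of_forall fun i => by fun_prop)
          (Eventually.of_forall fun v => ae_of_all _ fun s _ => by
            rw [Real.norm_eq_abs, abs_of_nonneg (le_max_right _ _)]
            have h1 := hGb (v - R - s)
            have h2 := abs_sub (G (v - R - s)) η
            have : 0 ≤ L * ε := by positivity
            apply max_le
            · linarith
            · positivity)
          (by simp)
          (ae_of_all _ fun s hs => by
            rw [uIoc_of_le hy] at hs
            apply tendsto_const_nhds.congr'
            filter_upwards [hev s hs.1.le] with v hv
            rw [hA]; simp only; rw [max_eq_right]; linarith)
        simpa using this
      refine squeeze_zero (fun v => le_max_right _ _) (fun v => ?_) hAt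
      have hAi : IntervalIntegrable (A v) volume 0 y := by
        apply Continuous.intervalIntegrable; fun_prop
      apply max_le
      · rw [hKd, abs_of_nonneg hy]
        have e1 : (∫ s in (0:ℝ)..y, G (v - R - s)) - η * y = ∫ s in (0:ℝ)..y, (G (v - R - s) - η) := by
          rw [intervalIntegral.integral_sub (by apply Continuous.intervalIntegrable; fun_prop)
            (by simp)]
          simp [mul_comm]
        have e2 : (∫ s in (0:ℝ)..y, A v s) + L * ε * y = ∫ s in (0:ℝ)..y, (A v s + L * ε) := by
          rw [intervalIntegral.integral_add hAi (by simp)]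
          simp only [intervalIntegral.integral_const, smul_eq_mul]; ring
        rw [e1, sub_le_iff_le_add, e2]
        refine (intervalIntegral.abs_integral_le_integral_abs hy).trans ?_
        apply intervalIntegral.integral_mono_on hy
          (by apply Continuous.intervalIntegrable; fun_prop)
          (by apply Continuous.intervalIntegrable; fun_prop)
        intro s _
        have : |G (v - R - s) - η| - L * ε ≤ A v s := le_max_left _ _
        linarith
      · exact intervalIntegral.integral_nonneg hy fun s _ => le_max_right _ _
    have hJ' : Tendsto (fun v => ∫ y, (K (v - R) - K (v - R - y)) ∂q) l (𝓝 H) :=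
      hJ.comp (tendsto_atTop_add_const_right l (-R) hid)
    have hle : ∀ v, |(∫ y, (K (v - R) - K (v - R - y)) ∂q) - η * μ| ≤ (∫ y, B v y ∂q) + L * ε * μ := by
      intro v
      have hBi : Integrable (B v) q :=
        (hqi.abs.const_mul (C + |η|)).mono' (by fun_prop) (ae_of_all _ (hBb v))
      rw [hμ, ← integral_const_mul, ← integral_sub (hBint _) (hqi.const_mul _),
        ← integral_const_mul, ← integral_add hBi (hqi.const_mul _)]
      refine (abs_integral_le_integral_abs).trans ?_
      apply integral_mono_ae ((hBint _).sub (hqi.const_mul _)).abs (hBi.add (hqi.const_mul _))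
      filter_upwards [hae0] with y hy
      have : |K (v - R) - K (v - R - y) - η * y| - L * ε * |y| ≤ B v y := le_max_left _ _
      rw [abs_of_nonneg hy] at this
      simp only [Pi.sub_apply, Pi.add_apply]
      linarith
    have t1 := (hJ'.sub_const (η * μ)).abs
    have t2 := hBt.add_const (L * ε * μ)
    rw [zero_add] at t2
    exact le_of_tendsto_of_tendsto' t1 t2 hle
  have : |H - η * μ| ≤ 0 := by
    apply le_of_forall_pos_le_add
    intro e he
    have := hJw (e / (L * (μ + 1))) (by positivity)
    refine this.trans ?_
    have : L * (e / (L * (μ + 1))) * μ = e * (μ / (μ + 1)) := by field_simp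
    rw [this, zero_add]
    have : μ / (μ + 1) ≤ 1 := by rw [div_le_one (by positivity)]; linarith
    nlinarith
  have := abs_nonpos_iff.1 this
  linarith

/-- key renewal theorem for Lipschitz solutions -/
lemma renewal [IsProbabilityMeasure q] {G h K : ℝ → ℝ} {C L H : ℝ}
    (hq0 : q (Iio 0) = 0) (hqi : Integrable (fun y => y) q)
    (hnl : ∀ d : ℝ, 0 < d → q {y | ∃ n : ℕ, y = n * d}ᶜ ≠ 0)
    (hGc : Continuous G) (hGb : ∀ u, |G u| ≤ C) (hL0 : 0 < L)
    (hL : ∀ u v, |G u - G v| ≤ L * |u - v|)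
    (hh : Tendsto h atTop (𝓝 0)) (heq : ∀ u, G u = (∫ y, G (u - y) ∂q) + h u)
    (hK : ∀ u, HasDerivAt K (G u) u)
    (hJ : Tendsto (fun u => ∫ y, (K u - K (u - y)) ∂q) atTop (𝓝 H))
    (hμ : 0 < ∫ y, y ∂q) :
    Tendsto G atTop (𝓝 (H / ∫ y, y ∂q)) := by
  have hbdd1 : IsBoundedUnder (· ≤ ·) atTop G := isBoundedUnder_of ⟨C, fun u => (abs_le.1 (hGb u)).2⟩
  have hbdd2 : IsBoundedUnder (· ≥ ·) atTop G := isBoundedUnder_of ⟨-C, fun u => (abs_le.1 (hGb u)).1⟩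
  -- both extremal cluster points
  have hup : limsup G atTop * (∫ y, y ∂q) = H := by
    refine eta_eq hq0 hqi hnl hGc hGb hL0 hL hh heq hK hJ ?_ ?_
    · intro ε hε
      filter_upwards [eventually_lt_of_limsup_lt (show limsup G atTop < limsup G atTop + ε by linarith) hbdd1]
        with u hu using hu.le
    · rw [mapClusterPt_iff_frequently]
      intro s hs
      obtain ⟨ε, hε, hsub⟩ := Metric.mem_nhds_iff.1 hs
      have f1 := frequently_lt_of_lt_limsup hbdd2.isCoboundedUnder_le
        (show limsup G atTop - ε < limsup G atTop by linarith)
      have f2 := eventually_lt_of_limsup_lt (show limsup G atTop < limsup G atTop + ε by linarith) hbdd1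
      refine (f1.and_eventually f2).mono fun u hu => hsub ?_
      rw [Metric.mem_ball, Real.dist_eq, abs_lt]
      constructor <;> linarith [hu.1, hu.2]
  have hdn : (-liminf G atTop) * (∫ y, y ∂q) = -H := by
    refine eta_eq (G := fun u => - G u) (h := fun u => - h u) (K := fun u => - K u) (C := C) (L := L)
      hq0 hqi hnl hGc.neg ?_ hL0 ?_ ?_ ?_ ?_ ?_ ?_ ?_
    · intro u; simpa using hGb u
    · intro u v
      have := hL u v
      rwa [← abs_neg, show -(G u - G v) = -G u - -G v by ring] at this
    · simpa using hh.neg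
    · intro u; rw [integral_neg]; linarith [heq u]
    · intro u; exact (hK u).neg
    · refine hJ.neg.congr fun u => ?_
      rw [← integral_neg]; congr 1; ext y; ring
    · intro ε hε
      filter_upwards [eventually_lt_of_lt_liminf (show liminf G atTop - ε < liminf G atTop by linarith) hbdd2]
        with u hu
      linarith
    · rw [mapClusterPt_iff_frequently]
      intro s hs
      obtain ⟨ε, hε, hsub⟩ := Metric.mem_nhds_iff.1 hs
      have f1 := frequently_lt_of_liminf_lt hbdd1.isCoboundedUnder_ge
        (show liminf G atTop < liminf G atTop + ε by linarith)
      have f2 := eventually_lt_of_lt_liminf (show liminf G atTop - ε < liminf G atTop by linarith) hbdd2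
      refine (f1.and_eventually f2).mono fun u hu => hsub ?_
      rw [Metric.mem_ball, Real.dist_eq, abs_lt]
      constructor <;> linarith [hu.1, hu.2]
  apply tendsto_of_liminf_eq_limsup _ _ hbdd1 hbdd2
  · rw [eq_div_iff hμ.ne']; linarith
  · rw [eq_div_iff hμ.ne']; linarith

end RenewalAux

namespace RenewalAux
open Topology

/-- alternating exponential generating function -/
noncomputable def EE (c : ℕ → ℝ) (t : ℝ) : ℝ := ∑' n : ℕ, (-t) ^ n / (n.factorial : ℝ) * c n

lemma EE_term_bound {c : ℕ → ℝ} (hc : ∀ n, |c n| ≤ 1) (t : ℝ) (n : ℕ) :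
    ‖(-t) ^ n / (n.factorial : ℝ) * c n‖ ≤ |t| ^ n / (n.factorial : ℝ) := by
  rw [norm_mul, norm_div, norm_pow, Real.norm_eq_abs, abs_neg, Real.norm_natCast]
  exact mul_le_of_le_one_right (by positivity) (hc n)

lemma EE_summable {c : ℕ → ℝ} (hc : ∀ n, |c n| ≤ 1) (t : ℝ) :
    Summable fun n : ℕ => (-t) ^ n / (n.factorial : ℝ) * c n :=
  Summable.of_norm_bounded (Real.summable_pow_div_factorial |t|) (EE_term_bound hc t)

lemma EE_zero (c : ℕ → ℝ) : EE c 0 = c 0 := by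
  unfold EE
  rw [tsum_eq_single 0]
  · simp
  · intro n hn; simp [hn]

lemma EE_hasDerivAt {c : ℕ → ℝ} (hc : ∀ n, |c n| ≤ 1) (t : ℝ) :
    HasDerivAt (EE c) (- EE (fun n => c (n + 1)) t) t := by
  set R := |t| + 1 with hR
  have hR0 : 0 < R := by positivity
  have key := hasDerivAt_tsum_of_isPreconnected (𝕜 := ℝ)
    (g := fun (n : ℕ) (t : ℝ) => (-t) ^ n / (n.factorial : ℝ) * c n)
    (g' := fun (n : ℕ) (t : ℝ) => -((n : ℝ) * (-t) ^ (n - 1)) / (n.factorial : ℝ) * c n)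
    (u := fun n : ℕ => (n : ℝ) * R ^ (n - 1) / (n.factorial : ℝ))
    (t := Metric.ball 0 R) (y₀ := 0) (y := t) ?_ Metric.isOpen_ball
    (convex_ball _ _).isPreconnected ?_ ?_ (by simpa using hR0) (EE_summable hc 0) (by simp [hR])
  · have e : ∑' n : ℕ, -((n : ℝ) * (-t) ^ (n - 1)) / (n.factorial : ℝ) * c n
        = - EE (fun n => c (n + 1)) t := by
      rw [tsum_eq_zero_add']
      · simp only [CharP.cast_eq_zero, zero_mul, neg_zero, zero_div, zero_add]
        unfold EE
        rw [← tsum_neg]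
        congr 1; ext n
        rw [Nat.factorial_succ]
        push_cast
        field_simp
      · refine ((EE_summable (c := fun n => c (n + 1)) (fun n => hc _) t).neg).congr fun n => ?_
        rw [Nat.factorial_succ]
        push_cast
        field_simp
    rw [e] at key
    exact key
  · rw [← summable_nat_add_iff 1]
    refine (Real.summable_pow_div_factorial R).congr fun n => ?_
    rw [Nat.factorial_succ]
    push_cast
    field_simp
  · intro n y _
    have h1 := ((hasDerivAt_neg y).pow n).div_const (n.factorial : ℝ) |>.mul_const (c n)
    refine HasDerivAt.congr_deriv h1 ?_
    ring
  · intro n y hy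
    rw [mem_ball_zero_iff, Real.norm_eq_abs] at hy
    rw [norm_mul, norm_div, norm_neg, norm_mul, norm_pow, norm_neg, Real.norm_natCast,
      Real.norm_natCast, Real.norm_eq_abs, Real.norm_eq_abs]
    refine (mul_le_of_le_one_right (by positivity) (hc n)).trans ?_
    gcongr

lemma EE_continuous {c : ℕ → ℝ} (hc : ∀ n, |c n| ≤ 1) : Continuous (EE c) :=
  continuous_iff_continuousAt.2 fun t => (EE_hasDerivAt hc t).continuousAt

variable (q : Measure ℝ)

noncomputable def Lq (j : ℕ) : ℝ := ∫ y, Real.exp (-(j * y)) ∂q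
noncomputable def Ps (j : ℕ) : ℝ := 1 - Lq q j
noncomputable def gam (k n : ℕ) : ℝ := ∏ i ∈ Finset.range n, Ps q (k + i)
noncomputable def mm (k : ℕ) (t : ℝ) : ℝ := EE (gam q k) t

variable {q}

lemma exp_integrable [IsProbabilityMeasure q] (hae : ∀ᵐ y ∂q, 0 ≤ y) (j : ℕ) :
    Integrable (fun y => Real.exp (-(j * y))) q := by
  refine Integrable.of_bound (by fun_prop) 1 ?_
  filter_upwards [hae] with y hy
  rw [Real.norm_eq_abs, Real.abs_exp, Real.exp_le_one_iff]
  have : (0:ℝ) ≤ j * y := by positivity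
  linarith

lemma Lq_nonneg (j : ℕ) : 0 ≤ Lq q j := integral_nonneg fun _ => (Real.exp_pos _).le

lemma Lq_le_one [IsProbabilityMeasure q] (hae : ∀ᵐ y ∂q, 0 ≤ y) (j : ℕ) : Lq q j ≤ 1 := by
  have : ∫ y, Real.exp (-(j * y)) ∂q ≤ ∫ y, (1:ℝ) ∂q := by
    apply integral_mono_ae (exp_integrable hae j) (integrable_const _)
    filter_upwards [hae] with y hy
    rw [Real.exp_le_one_iff]
    have : (0:ℝ) ≤ j * y := by positivity
    linarith
  simpa [Lq] using this

lemma Ps_pos [IsProbabilityMeasure q] (hae : ∀ᵐ y ∂q, 0 ≤ y) (hne : ¬ ∀ᵐ y ∂q, y = 0)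
    {j : ℕ} (hj : 1 ≤ j) : 0 < Ps q j := by
  have hj0 : (0:ℝ) < j := by exact_mod_cast hj
  have e : Ps q j = ∫ y, (1 - Real.exp (-(j * y))) ∂q := by
    rw [integral_sub (integrable_const _) (exp_integrable hae j)]; simp [Ps, Lq]
  have hnn : 0 ≤ᵐ[q] fun y => 1 - Real.exp (-(j * y)) := by
    filter_upwards [hae] with y hy
    have : Real.exp (-(j * y)) ≤ 1 := by
      rw [Real.exp_le_one_iff]
      have : (0:ℝ) ≤ j * y := by positivity
      linarith
    simpa using this
  have hi : Integrable (fun y => 1 - Real.exp (-(j * y))) q :=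
    (integrable_const _).sub (exp_integrable hae j)
  rw [e]
  refine lt_of_le_of_ne (integral_nonneg_of_ae hnn) fun h0 => hne ?_
  have := (integral_eq_zero_iff_of_nonneg_ae hnn hi).1 h0.symm
  filter_upwards [this] with y hy
  have h1 : Real.exp (-(j * y)) = 1 := by
    simp only [Pi.zero_apply] at hy; linarith
  rw [Real.exp_eq_one_iff] at h1
  have : (j:ℝ) * y = 0 := by linarith
  rcases mul_eq_zero.1 this with h | h
  · exact absurd h hj0.ne'
  · exact h

lemma Ps_abs_le [IsProbabilityMeasure q] (hae : ∀ᵐ y ∂q, 0 ≤ y) (j : ℕ) : |Ps q j| ≤ 1 := by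
  have := Lq_le_one hae j; have := Lq_nonneg (q := q) j
  unfold Ps; rw [abs_le]; constructor <;> linarith

lemma gam_abs_le [IsProbabilityMeasure q] (hae : ∀ᵐ y ∂q, 0 ≤ y) (k n : ℕ) : |gam q k n| ≤ 1 := by
  unfold gam
  rw [Finset.abs_prod]
  exact Finset.prod_le_one (fun _ _ => abs_nonneg _) fun i _ => Ps_abs_le hae _

lemma gam_succ (k n : ℕ) : gam q k (n + 1) = gam q k n * Ps q (k + n) := by
  unfold gam; rw [Finset.prod_range_succ]

lemma gam_succ' (k n : ℕ) : gam q k (n + 1) = Ps q k * gam q (k + 1) n := by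
  unfold gam; rw [Finset.prod_range_succ', mul_comm]
  simp only [add_zero]
  congr 1
  apply Finset.prod_congr rfl
  intro i _; congr 1; ring

lemma mm_deriv [IsProbabilityMeasure q] (hae : ∀ᵐ y ∂q, 0 ≤ y) (k : ℕ) (t : ℝ) :
    HasDerivAt (mm q k) (-(Ps q k * mm q (k + 1) t)) t := by
  refine HasDerivAt.congr_deriv (EE_hasDerivAt (gam_abs_le hae k) t) ?_
  unfold mm EE
  congr 1
  rw [← tsum_mul_left]
  congr 1; ext n
  beta_reduce
  rw [gam_succ']; ring

lemma mm_zero (k : ℕ) : mm q k 0 = 1 := by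
  unfold mm; rw [EE_zero]; simp [gam]

/-- termwise integration -/
lemma EE_integral [IsProbabilityMeasure q] (hae : ∀ᵐ y ∂q, 0 ≤ y) {c : ℕ → ℝ}
    (hc : ∀ n, |c n| ≤ 1) (k : ℕ) (t : ℝ) :
    Integrable (fun y => Real.exp (-(k * y)) * EE c (Real.exp (-y) * t)) q ∧
    ∫ y, Real.exp (-(k * y)) * EE c (Real.exp (-y) * t) ∂q = EE (fun n => c n * Lq q (k + n)) t := by
  constructor
  · refine Integrable.of_bound (C := Real.exp |t|)
      (by have := EE_continuous hc; apply Continuous.aestronglyMeasurable; fun_prop) ?_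
    filter_upwards [hae] with y hy
    have h1 : Real.exp (-(k * y)) ≤ 1 := by
      rw [Real.exp_le_one_iff]
      have : (0:ℝ) ≤ k * y := by positivity
      linarith
    have h2 : Real.exp (-y) ≤ 1 := by rw [Real.exp_le_one_iff]; linarith
    have h3 : |EE c (Real.exp (-y) * t)| ≤ Real.exp |t| := by
      unfold EE
      have hs := Real.summable_pow_div_factorial |t|
      have : Real.exp |t| = ∑' n : ℕ, |t| ^ n / (n.factorial : ℝ) := by
        rw [Real.exp_eq_exp_ℝ, NormedSpace.exp_eq_tsum_div]
      rw [this]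
      rw [← Real.norm_eq_abs]
      apply tsum_of_norm_bounded hs.hasSum
      intro n
      refine (EE_term_bound hc _ n).trans ?_
      rw [abs_mul, Real.abs_exp]
      gcongr
      exact mul_le_of_le_one_left (abs_nonneg _) h2
    rw [norm_mul, Real.norm_eq_abs, Real.norm_eq_abs, Real.abs_exp]
    calc _ ≤ 1 * Real.exp |t| := by gcongr
      _ = _ := one_mul _
  · have e : ∀ y, Real.exp (-(k * y)) * EE c (Real.exp (-y) * t)
        = ∑' n : ℕ, ((-t) ^ n / (n.factorial : ℝ) * c n) * Real.exp (-((k + n : ℕ) * y)) := by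
      intro y
      unfold EE
      rw [← tsum_mul_left]
      congr 1; ext n
      have : Real.exp (-((k + n : ℕ) * y)) = Real.exp (-(k * y)) * Real.exp (-y) ^ n := by
        rw [← Real.exp_nat_mul, ← Real.exp_add]; congr 1; push_cast; ring
      rw [this, show -(Real.exp (-y) * t) = Real.exp (-y) * (-t) by ring, mul_pow]
      ring
    simp_rw [e]
    rw [← integral_tsum_of_summable_integral_norm
      (F := fun (n : ℕ) (y : ℝ) => ((-t) ^ n / (n.factorial : ℝ) * c n) * Real.exp (-((k + n : ℕ) * y)))]
    · unfold EE
      congr 1; ext n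
      rw [integral_const_mul]; unfold Lq; ring
    · intro n; exact (exp_integrable hae _).const_mul _
    · refine Summable.of_nonneg_of_le (fun n => integral_nonneg fun y => norm_nonneg _) ?_
        (Real.summable_pow_div_factorial |t|)
      intro n
      simp_rw [norm_mul _ (Real.exp _), Real.norm_eq_abs (Real.exp _), Real.abs_exp]
      rw [integral_const_mul]
      calc _ ≤ |t| ^ n / (n.factorial : ℝ) * 1 := by
            exact mul_le_mul (EE_term_bound hc t n) (Lq_le_one hae _) (Lq_nonneg _)
              (by positivity)
        _ = _ := mul_one _

lemma EE_sub {c d : ℕ → ℝ} (hc : ∀ n, |c n| ≤ 1) (hd : ∀ n, |d n| ≤ 1) (t : ℝ) :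
    EE c t - EE d t = EE (fun n => c n - d n) t := by
  unfold EE
  rw [← (EE_summable hc t).tsum_sub (EE_summable hd t)]
  congr 1; ext n; ring

lemma mul_Lq_abs [IsProbabilityMeasure q] (hae : ∀ᵐ y ∂q, 0 ≤ y) {c : ℝ} (hc : |c| ≤ 1) (j : ℕ) :
    |c * Lq q j| ≤ 1 := by
  rw [abs_mul, abs_of_nonneg (Lq_nonneg j)]
  exact mul_le_one₀ hc (Lq_nonneg j) (Lq_le_one hae j)

/-- branching equation -/
lemma mm_branch [IsProbabilityMeasure q] (hae : ∀ᵐ y ∂q, 0 ≤ y) (k : ℕ) (t : ℝ) :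
    mm q k t - ∫ y, Real.exp (-(k * y)) * mm q k (Real.exp (-y) * t) ∂q
      = Ps q k * mm q (k + 1) t := by
  have h := (EE_integral hae (gam_abs_le hae k) k t).2
  unfold mm
  rw [h, EE_sub (gam_abs_le hae k) fun n => mul_Lq_abs hae (gam_abs_le hae k n) _]
  unfold EE
  rw [← tsum_mul_left]
  congr 1; ext n
  have := gam_succ (q := q) k n
  rw [gam_succ'] at this
  unfold Ps at this ⊢
  linear_combination ((-t) ^ n / (n.factorial : ℝ)) * (-this)

/-- positivity -/
lemma mm_pos [IsProbabilityMeasure q] (hae : ∀ᵐ y ∂q, 0 ≤ y) (k : ℕ) {t : ℝ} (ht : 0 ≤ t) :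
    0 < mm q k t := by
  by_contra hneg
  have hcont : Continuous (mm q k) := EE_continuous (gam_abs_le hae k)
  set Z : Set ℝ := {s | 0 ≤ s ∧ mm q k s ≤ 0} with hZ
  have hZc : IsClosed Z := isClosed_Ici.inter (isClosed_le hcont continuous_const)
  have hZb : BddBelow Z := ⟨0, fun s hs => hs.1⟩
  have hZn : Z.Nonempty := ⟨t, ht, not_lt.1 hneg⟩
  have hT := hZc.csInf_mem hZn hZb
  set T := sInf Z with hTdef
  have hlt : ∀ s, 0 ≤ s → s < T → 0 < mm q k s := by
    intro s hs hsT
    by_contra hc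
    exact absurd (csInf_le hZb (show s ∈ Z from ⟨hs, not_lt.1 hc⟩)) (not_le.2 hsT)
  have hderiv : ∀ s, HasDerivAt (fun s => Real.exp s * mm q k s)
      (Real.exp s * ∫ y, Real.exp (-(k * y)) * mm q k (Real.exp (-y) * s) ∂q) s := by
    intro s
    refine HasDerivAt.congr_deriv ((Real.hasDerivAt_exp s).mul (mm_deriv hae k s)) ?_
    rw [← mm_branch hae]; ring
  have hmono : MonotoneOn (fun s => Real.exp s * mm q k s) (Icc 0 T) := by
    apply monotoneOn_of_deriv_nonneg (convex_Icc _ _)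
    · exact (Real.continuous_exp.mul hcont).continuousOn
    · exact fun s _ => (hderiv s).differentiableAt.differentiableWithinAt
    · intro s hs
      rw [interior_Icc] at hs
      rw [(hderiv s).deriv]
      apply mul_nonneg (Real.exp_pos _).le
      apply integral_nonneg_of_ae
      filter_upwards [hae] with y hy
      have h2 : Real.exp (-y) ≤ 1 := by rw [Real.exp_le_one_iff]; linarith
      refine mul_nonneg (Real.exp_pos _).le (hlt _ (mul_nonneg (Real.exp_pos _).le hs.1.le) ?_).le
      exact (mul_le_of_le_one_left hs.1.le h2).trans_lt hs.2
  have := hmono (left_mem_Icc.2 hT.1) (right_mem_Icc.2 hT.1) hT.1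
  simp only [Real.exp_zero, mm_zero, mul_one] at this
  have h2 := mul_nonpos_of_nonneg_of_nonpos (Real.exp_pos T).le hT.2
  linarith

end RenewalAux
namespace RenewalAux
open Topology

lemma mono_bound {F g : ℝ → ℝ} (hF : ∀ x, HasDerivAt F (g x) x) (hg : AntitoneOn g (Ici 0))
    {s t : ℝ} (hs : 0 ≤ s) (hst : s ≤ t) : g t * (t - s) ≤ F t - F s := by
  apply (convex_Icc s t).mul_sub_le_image_sub_of_le_deriv (C := g t)
    (fun x _ => (hF x).continuousAt.continuousWithinAt)
    (fun x _ => (hF x).differentiableAt.differentiableWithinAt) _ s (left_mem_Icc.2 hst) t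
    (right_mem_Icc.2 hst) hst
  intro x hx
  rw [interior_Icc] at hx
  rw [(hF x).deriv]
  exact hg (show (0:ℝ) ≤ x by linarith [hx.1]) (show (0:ℝ) ≤ t by linarith) hx.2.le

variable {q : Measure ℝ} [IsProbabilityMeasure q]

lemma mm_antitone (hae : ∀ᵐ y ∂q, 0 ≤ y) (hP : ∀ j, 1 ≤ j → 0 < Ps q j) {k : ℕ} (hk : 1 ≤ k) :
    AntitoneOn (mm q k) (Ici 0) := by
  apply antitoneOn_of_deriv_nonpos (convex_Ici 0)
  · exact fun x _ => (mm_deriv hae k x).continuousAt.continuousWithinAt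
  · exact fun x _ => (mm_deriv hae k x).differentiableAt.differentiableWithinAt
  · intro x hx
    rw [interior_Ici] at hx
    rw [(mm_deriv hae k x).deriv]
    have := mm_pos hae (k + 1) (le_of_lt hx)
    have := hP k hk
    have : 0 < Ps q k * mm q (k + 1) x := by positivity
    linarith

noncomputable def cM (q : Measure ℝ) : ℕ → ℝ
  | 0 => 0
  | n + 1 => - gam q 1 n

noncomputable def MM (q : Measure ℝ) (t : ℝ) : ℝ := EE (cM q) t

lemma cM_abs (hae : ∀ᵐ y ∂q, 0 ≤ y) (n : ℕ) : |cM q n| ≤ 1 := by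
  cases n with
  | zero => simp [cM]
  | succ n => simpa [cM] using gam_abs_le hae 1 n

lemma MM_deriv (hae : ∀ᵐ y ∂q, 0 ≤ y) (t : ℝ) : HasDerivAt (MM q) (mm q 1 t) t := by
  refine HasDerivAt.congr_deriv (EE_hasDerivAt (cM_abs hae) t) ?_
  unfold mm EE
  rw [← tsum_neg]
  congr 1; ext n
  simp [cM]

lemma MM_integrable (hae : ∀ᵐ y ∂q, 0 ≤ y) (t : ℝ) :
    Integrable (fun y => MM q (Real.exp (-y) * t)) q := by
  simpa [MM] using (EE_integral hae (cM_abs hae) 0 t).1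

lemma MM_eq (hae : ∀ᵐ y ∂q, 0 ≤ y) (t : ℝ) :
    ∫ y, (MM q t - MM q (Real.exp (-y) * t)) ∂q = 1 - mm q 1 t := by
  rw [integral_sub (integrable_const _) (MM_integrable hae t)]
  have h := (EE_integral hae (cM_abs hae) 0 t).2
  simp only [CharP.cast_eq_zero, zero_mul, neg_zero, Real.exp_zero, one_mul, zero_add] at h
  simp only [integral_const, probReal_univ, smul_eq_mul, one_mul]
  unfold MM
  have hs1 : ∀ n, |cM q n * Lq q n| ≤ 1 := fun n => mul_Lq_abs hae (cM_abs hae n) n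
  rw [h, EE_sub (cM_abs hae) hs1]
  unfold mm EE
  rw [(EE_summable (gam_abs_le hae 1) t).tsum_eq_zero_add]
  have hz : Summable fun n : ℕ => (-t) ^ n / (n.factorial : ℝ) * (cM q n - cM q n * Lq q n) := by
    refine ((EE_summable (cM_abs hae) t).sub (EE_summable hs1 t)).congr fun n => ?_
    ring
  rw [hz.tsum_eq_zero_add]
  have e0 : gam q 1 0 = 1 := by simp [gam]
  simp only [pow_zero, Nat.factorial_zero, Nat.cast_one, div_one, cM, zero_mul, sub_zero, mul_zero,
    zero_add, e0, one_mul, sub_add_cancel_left]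
  rw [← tsum_neg]
  congr 1; ext n
  have := gam_succ (q := q) 1 n
  rw [this, Ps, add_comm 1 n]; ring

lemma first_bound (hae : ∀ᵐ y ∂q, 0 ≤ y) (hP : ∀ j, 1 ≤ j → 0 < Ps q j) {t : ℝ} (ht : 0 ≤ t) :
    t * mm q 1 t * Ps q 1 ≤ 1 := by
  have h1 := MM_eq hae t
  have hpos := mm_pos hae 1 ht
  have e : t * mm q 1 t * Ps q 1 = ∫ y, (t * mm q 1 t) * (1 - Real.exp (-((1:ℕ) * y))) ∂q := by
    rw [integral_const_mul, integral_sub (integrable_const _) (exp_integrable hae 1)]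
    simp [Ps, Lq]
  have h2 : ∫ y, (t * mm q 1 t) * (1 - Real.exp (-((1:ℕ) * y))) ∂q
      ≤ ∫ y, (MM q t - MM q (Real.exp (-y) * t)) ∂q := by
    apply integral_mono_ae (((integrable_const _).sub (exp_integrable hae 1)).const_mul _)
      ((integrable_const _).sub (MM_integrable hae t))
    filter_upwards [hae] with y hy
    have h2 : Real.exp (-y) ≤ 1 := by rw [Real.exp_le_one_iff]; linarith
    have := mono_bound (MM_deriv hae) (mm_antitone hae hP le_rfl)
      (mul_nonneg (Real.exp_pos (-y)).le ht) (mul_le_of_le_one_left ht h2)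
    simp only [Nat.cast_one, one_mul]
    simp only [Pi.sub_apply] at *
    linarith
  linarith

lemma all_bound (hae : ∀ᵐ y ∂q, 0 ≤ y) (hP : ∀ j, 1 ≤ j → 0 < Ps q j) (k : ℕ) (hk : 1 ≤ k) :
    ∃ C, ∀ t, 0 ≤ t → t ^ k * mm q k t ≤ C := by
  induction k, hk using Nat.le_induction with
  | base =>
    refine ⟨1 / Ps q 1, fun t ht => ?_⟩
    rw [le_div_iff₀ (hP 1 le_rfl), pow_one]
    exact first_bound hae hP ht
  | succ k hk ih =>
    obtain ⟨C, hC⟩ := ih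
    refine ⟨2 ^ (k + 1) * C / Ps q k, fun t ht => ?_⟩
    rw [le_div_iff₀ (hP k hk)]
    have hd : ∀ x, HasDerivAt (fun x => - mm q k x) (Ps q k * mm q (k + 1) x) x := fun x => by
      exact HasDerivAt.congr_deriv (mm_deriv hae k x).neg (neg_neg _)
    have ha : AntitoneOn (fun x => Ps q k * mm q (k + 1) x) (Ici 0) := fun x hx y hy hxy =>
      mul_le_mul_of_nonneg_left (mm_antitone hae hP (by omega : 1 ≤ k + 1) hx hy hxy) (hP k hk).le
    have h1 := mono_bound hd ha (s := t / 2) (t := t) (by positivity) (by linarith)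
    have h2 := mm_pos hae k ht
    have h3 := hC (t / 2) (by positivity)
    have h4 : Ps q k * mm q (k + 1) t * (t / 2) ≤ mm q k (t / 2) := by
      rw [show t - t / 2 = t / 2 by ring] at h1; linarith
    calc t ^ (k + 1) * mm q (k + 1) t * Ps q k
        = 2 ^ (k + 1) * ((t / 2) ^ k * (Ps q k * mm q (k + 1) t * (t / 2))) := by
          rw [div_pow]; field_simp; ring
      _ ≤ 2 ^ (k + 1) * ((t / 2) ^ k * mm q k (t / 2)) := by gcongr
      _ ≤ 2 ^ (k + 1) * C := by gcongr

noncomputable def FF (q : Measure ℝ) (k : ℕ) (u : ℝ) : ℝ := Real.exp u ^ k * mm q k (Real.exp u)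

lemma FF_nonneg (hae : ∀ᵐ y ∂q, 0 ≤ y) (k : ℕ) (u : ℝ) : 0 ≤ FF q k u :=
  mul_nonneg (by positivity) (mm_pos hae k (Real.exp_pos u).le).le

lemma FF_bound (hae : ∀ᵐ y ∂q, 0 ≤ y) (hP : ∀ j, 1 ≤ j → 0 < Ps q j) (k : ℕ) (hk : 1 ≤ k) :
    ∃ C, ∀ u, |FF q k u| ≤ C := by
  obtain ⟨C, hC⟩ := all_bound hae hP k hk
  refine ⟨C, fun u => ?_⟩
  rw [abs_of_nonneg (FF_nonneg hae k u)]
  exact hC _ (Real.exp_pos u).le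

lemma FF_deriv (hae : ∀ᵐ y ∂q, 0 ≤ y) (k : ℕ) (u : ℝ) :
    HasDerivAt (FF q k) (k * FF q k u - Ps q k * FF q (k + 1) u) u := by
  have h1 := (Real.hasDerivAt_exp u).pow k
  have h2 := (mm_deriv hae k (Real.exp u)).comp u (Real.hasDerivAt_exp u)
  refine HasDerivAt.congr_deriv (h1.mul h2) ?_
  unfold FF
  cases k with
  | zero => simp; ring
  | succ k => simp [pow_succ]; ring

lemma FF_lip (hae : ∀ᵐ y ∂q, 0 ≤ y) (hP : ∀ j, 1 ≤ j → 0 < Ps q j) (k : ℕ) (hk : 1 ≤ k) :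
    ∃ L, 0 < L ∧ ∀ u v, |FF q k u - FF q k v| ≤ L * |u - v| := by
  obtain ⟨C, hC⟩ := FF_bound hae hP k hk
  obtain ⟨D, hD⟩ := FF_bound hae hP (k + 1) (by omega)
  have hC0 : 0 ≤ C := (abs_nonneg _).trans (hC 0)
  have hD0 : 0 ≤ D := (abs_nonneg _).trans (hD 0)
  refine ⟨k * C + D + 1, by positivity, fun u v => ?_⟩
  have := convex_univ.norm_image_sub_le_of_norm_hasDerivWithin_le (C := k * C + D + 1)
    (fun x _ => (FF_deriv hae k x).hasDerivWithinAt) (fun x _ => ?_) (mem_univ v) (mem_univ u)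
  · exact this
  · have h1 := norm_sub_le (k * FF q k x) (Ps q k * FF q (k + 1) x)
    rw [norm_mul, norm_mul, Real.norm_natCast] at h1
    simp only [Real.norm_eq_abs] at h1 ⊢
    have h2 : k * |FF q k x| ≤ k * C := by gcongr; exact hC x
    have h3 : |Ps q k| * |FF q (k + 1) x| ≤ 1 * D :=
      mul_le_mul (Ps_abs_le hae k) (hD x) (abs_nonneg _) zero_le_one
    linarith

lemma barbalat {F F' : ℝ → ℝ} {c L : ℝ} (hF : ∀ u, HasDerivAt F (F' u) u)
    (ht : Tendsto F atTop (𝓝 c)) (hL0 : 0 < L) (hL : ∀ u v, |F' u - F' v| ≤ L * |u - v|) :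
    Tendsto F' atTop (𝓝 0) := by
  rw [Metric.tendsto_nhds]
  intro ε hε
  set δ := ε / (2 * L) with hδ
  have hδ0 : 0 < δ := by positivity
  have hd : Tendsto (fun u => F (u + δ) - F u) atTop (𝓝 0) := by
    simpa using (ht.comp (tendsto_atTop_add_const_right atTop δ tendsto_id)).sub ht
  filter_upwards [hd.eventually (Metric.ball_mem_nhds 0 (show 0 < δ * (ε / 2) by positivity))] with u hu
  rw [Real.dist_eq, sub_zero] at hu ⊢
  obtain ⟨ξ, hξ, he⟩ := exists_hasDerivAt_eq_slope F F' (show u < u + δ by linarith)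
    (fun x _ => (hF x).continuousAt.continuousWithinAt) (fun x _ => hF x)
  rw [add_sub_cancel_left] at he
  have h1 : |F' ξ| < ε / 2 := by
    rw [he, abs_div, abs_of_pos hδ0, div_lt_iff₀ hδ0]; linarith
  have h2 := hL u ξ
  have h3 : L * |u - ξ| ≤ ε / 2 := by
    calc L * |u - ξ| ≤ L * δ := by
          gcongr
          rw [abs_le]; constructor <;> linarith [hξ.1, hξ.2]
      _ = ε / 2 := by rw [hδ]; field_simp
  have h4 := abs_sub_abs_le_abs_sub (F' u) (F' ξ)
  linarith

lemma FF_succ (hae : ∀ᵐ y ∂q, 0 ≤ y) (hP : ∀ j, 1 ≤ j → 0 < Ps q j) {k : ℕ} (hk : 1 ≤ k) {c : ℝ}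
    (h : Tendsto (FF q k) atTop (𝓝 c)) : Tendsto (FF q (k + 1)) atTop (𝓝 (k * c / Ps q k)) := by
  obtain ⟨L1, h10, h1⟩ := FF_lip hae hP k hk
  obtain ⟨L2, h20, h2⟩ := FF_lip hae hP (k + 1) (by omega)
  have := barbalat (FF_deriv hae k) h (L := k * L1 + L2) (by positivity) (fun u v => ?_)
  · have h3 := ((h.const_mul (k:ℝ)).sub this).div_const (Ps q k)
    rw [sub_zero] at h3
    refine h3.congr fun u => ?_
    have := (hP k hk).ne'
    field_simp
    ring
  · have e : k * FF q k u - Ps q k * FF q (k + 1) u - (k * FF q k v - Ps q k * FF q (k + 1) v)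
        = k * (FF q k u - FF q k v) - Ps q k * (FF q (k + 1) u - FF q (k + 1) v) := by ring
    rw [e]
    have h3 := norm_sub_le (k * (FF q k u - FF q k v)) (Ps q k * (FF q (k + 1) u - FF q (k + 1) v))
    rw [norm_mul, norm_mul, Real.norm_natCast] at h3
    simp only [Real.norm_eq_abs] at h3
    have h4 : k * |FF q k u - FF q k v| ≤ k * (L1 * |u - v|) := by gcongr; exact h1 u v
    have h5 : |Ps q k| * |FF q (k + 1) u - FF q (k + 1) v| ≤ 1 * (L2 * |u - v|) :=
      mul_le_mul (Ps_abs_le hae k) (h2 u v) (abs_nonneg _) zero_le_one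
    linarith

lemma FF_exp_neg (hae : ∀ᵐ y ∂q, 0 ≤ y) (hP : ∀ j, 1 ≤ j → 0 < Ps q j) {k : ℕ} (hk : 1 ≤ k) :
    Tendsto (fun u => Real.exp (-u) * FF q k u) atTop (𝓝 0) := by
  obtain ⟨C, hC⟩ := FF_bound hae hP k hk
  have h0 : Tendsto (fun u => Real.exp (-u) * C) atTop (𝓝 0) := by
    simpa using (Real.tendsto_exp_neg_atTop_nhds_zero).mul_const C
  refine squeeze_zero (fun u => mul_nonneg (Real.exp_pos _).le (FF_nonneg hae k u)) (fun u => ?_) h0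
  gcongr
  exact (le_abs_self _).trans (hC u)

lemma FF_one (hq0 : q (Iio 0) = 0) (hqi : Integrable (fun y => y) q)
    (hnl : ∀ d : ℝ, 0 < d → q {y | ∃ n : ℕ, y = n * d}ᶜ ≠ 0)
    (hae : ∀ᵐ y ∂q, 0 ≤ y) (hP : ∀ j, 1 ≤ j → 0 < Ps q j) (hμ : 0 < ∫ y, y ∂q) :
    Tendsto (FF q 1) atTop (𝓝 (1 / ∫ y, y ∂q)) := by
  obtain ⟨C, hC⟩ := FF_bound hae hP 1 le_rfl
  obtain ⟨L, hL0, hL⟩ := FF_lip hae hP 1 le_rfl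
  have hshift : ∀ u y : ℝ, Real.exp (u - y) = Real.exp (-y) * Real.exp u := by
    intro u y; rw [← Real.exp_add]; congr 1; ring
  refine renewal (G := FF q 1) (h := fun u => Ps q 1 * (Real.exp (-u) * FF q 2 u))
    (K := fun u => MM q (Real.exp u)) (C := C) (L := L) (H := 1) hq0 hqi hnl
    (continuous_iff_continuousAt.2 fun u => (FF_deriv hae 1 u).continuousAt) hC hL0 hL ?_ ?_ ?_ ?_ hμ
  · simpa using (FF_exp_neg hae hP (k := 2) (by norm_num)).const_mul (Ps q 1)
  · intro u
    have h1 := mm_branch hae 1 (Real.exp u)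
    have e : ∫ y, FF q 1 (u - y) ∂q
        = Real.exp u * ∫ y, Real.exp (-((1:ℕ) * y)) * mm q 1 (Real.exp (-y) * Real.exp u) ∂q := by
      rw [← integral_const_mul]
      congr 1; ext y
      unfold FF
      rw [hshift]; simp; ring
    rw [e]
    have e2 : Real.exp (-u) * FF q 2 u = Real.exp u * mm q 2 (Real.exp u) := by
      unfold FF
      have : Real.exp (-u) * Real.exp u = 1 := by rw [← Real.exp_add]; simp
      linear_combination (Real.exp u * mm q 2 (Real.exp u)) * this
    rw [e2]
    unfold FF
    rw [pow_one]
    norm_num at h1 ⊢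
    linear_combination (Real.exp u) * h1
  · intro u
    have := (MM_deriv hae (Real.exp u)).comp u (Real.hasDerivAt_exp u)
    refine HasDerivAt.congr_deriv this ?_
    unfold FF; ring
  · have e : ∀ u, ∫ y, (MM q (Real.exp u) - MM q (Real.exp (u - y))) ∂q
        = 1 - Real.exp (-u) * FF q 1 u := by
      intro u
      simp_rw [hshift]
      rw [MM_eq hae]
      unfold FF
      have : Real.exp (-u) * Real.exp u = 1 := by rw [← Real.exp_add]; simp
      linear_combination (mm q 1 (Real.exp u)) * this
    simp_rw [e]
    simpa using (FF_exp_neg hae hP (k := 1) le_rfl).const_sub 1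

lemma core (hq0 : q (Iio 0) = 0) (hqi : Integrable (fun y => y) q)
    (hnl : ∀ d : ℝ, 0 < d → q {y | ∃ n : ℕ, y = n * d}ᶜ ≠ 0) :
    (∀ j, 1 ≤ j → 0 < Ps q j) ∧ ∀ k, 1 ≤ k → Tendsto (fun t => t ^ k * mm q k t) atTop
      (𝓝 (((k - 1).factorial : ℝ) / (∫ y, y ∂q) * ∏ j ∈ Finset.Icc 1 (k - 1), (Ps q j)⁻¹)) := by
  have hae : ∀ᵐ y ∂q, 0 ≤ y := by
    rw [ae_iff]; simpa [Iio] using hq0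
  have hne : ¬ ∀ᵐ y ∂q, y = 0 := by
    intro h
    apply hnl 1 one_pos
    refine measure_mono_null ?_ (ae_iff.1 h)
    intro y hy hy0
    exact hy ⟨0, by simp [hy0]⟩
  have hP : ∀ j, 1 ≤ j → 0 < Ps q j := fun j hj => Ps_pos hae hne hj
  have hμ : 0 < ∫ y, y ∂q := by
    refine lt_of_le_of_ne (integral_nonneg_of_ae hae) fun h0 => hne ?_
    exact (integral_eq_zero_iff_of_nonneg_ae hae hqi).1 h0.symm
  refine ⟨hP, fun k hk => ?_⟩
  have hF : Tendsto (FF q k) atTop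
      (𝓝 (((k - 1).factorial : ℝ) / (∫ y, y ∂q) * ∏ j ∈ Finset.Icc 1 (k - 1), (Ps q j)⁻¹)) := by
    induction k, hk using Nat.le_induction with
    | base => simpa using FF_one hq0 hqi hnl hae hP hμ
    | succ k hk ih =>
      convert FF_succ hae hP hk ih using 2
      obtain ⟨n, rfl⟩ : ∃ n, k = n + 1 := ⟨k - 1, by omega⟩
      simp only [Nat.add_sub_cancel]
      rw [Finset.prod_Icc_succ_top (by omega), Nat.factorial_succ]
      push_cast
      ring
  refine (hF.comp Real.tendsto_log_atTop).congr' ?_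
  filter_upwards [eventually_gt_atTop 0] with t ht
  simp only [Function.comp, FF, Real.exp_log ht]

end RenewalAux

/-- Under the Malthusian hypotheses (`σ` nonarithmetic, `σ((0,1]) > 1`,
`σ({1}) < 1`, `α > 0`, `φ(β*) = 1` with `β* > 0` and `β* > β_a`), for every integer
`k ≥ 1` the factors `ψ(β*+αj)`, `1 ≤ j`, are strictly positive and
`t^k·m(t,β*+αk) → ((k−1)!/(αψ'(β*)))·∏_{j=1}^{k−1} ψ(β*+αj)⁻¹` as `t → ∞`,
where `ψ'(β*) = ∫ (−log x)·x^{β*} σ(dx)`. -/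
theorem mean_power_sum_asymptotics_at_integer_shifts
    (σ : Measure ℝ) (α : ℝ) (hα : 0 < α)
    (hnonarith : ¬ IsArithmeticMeasure σ)
    (hsup : 1 < σ (Ioc (0:ℝ) 1)) (h1 : σ {(1:ℝ)} < 1)
    (βs : ℝ) (hβs_pos : 0 < βs)
    (hβs : ∫⁻ x in Ioc (0:ℝ) 1, ENNReal.ofReal (x ^ βs) ∂σ = 1)
    (hβsa : ∃ b < βs, ∫⁻ x in Ioc (0:ℝ) 1, ENNReal.ofReal (x ^ b) ∂σ < ⊤) :
    (∀ j : ℕ, 1 ≤ j → 0 < psiR σ (βs + α * j)) ∧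
    (∀ k : ℕ, 1 ≤ k →
      Tendsto (fun t : ℝ => t ^ k * mSeriesR σ α (βs + α * k) t) atTop
        (nhds ((((k - 1).factorial : ℝ) / (α * ∫ x in Ioc (0:ℝ) 1, (-Real.log x) * x ^ βs ∂σ))
          * ∏ j ∈ Finset.Icc 1 (k - 1), (psiR σ (βs + α * j))⁻¹))) := by
  classical
  set ν : Measure ℝ := σ.restrict (Ioc (0:ℝ) 1) with hν
  set w : ℝ → ENNReal := fun x => ENNReal.ofReal (x ^ βs) with hw
  have hwm : Measurable w := by fun_prop
  set p : Measure ℝ := ν.withDensity w with hp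
  set T : ℝ → ℝ := fun x => -(α * Real.log x) with hT
  have hTm : Measurable T := by fun_prop
  set q : Measure ℝ := p.map T with hq
  have hpp : IsProbabilityMeasure p := ⟨by
    rw [hp, withDensity_apply _ MeasurableSet.univ, Measure.restrict_univ]; exact hβs⟩
  have hqp : IsProbabilityMeasure q := Measure.isProbabilityMeasure_map hTm.aemeasurable
  have hνae : ∀ᵐ x ∂ν, x ∈ Ioc (0:ℝ) 1 := ae_restrict_mem measurableSet_Ioc
  have hpae : ∀ᵐ x ∂p, x ∈ Ioc (0:ℝ) 1 := withDensity_absolutelyContinuous ν w hνae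
  have hwtop : ∀ᵐ x ∂ν, w x < ⊤ := ae_of_all _ fun x => ENNReal.ofReal_lt_top
  have hIntg : ∀ f : ℝ → ℝ, Measurable f → ∫ y, f y ∂q = ∫ x, x ^ βs * f (T x) ∂ν := by
    intro f hf
    rw [hq, integral_map hTm.aemeasurable hf.aestronglyMeasurable, hp,
      integral_withDensity_eq_integral_toReal_smul hwm hwtop]
    apply integral_congr_ae
    filter_upwards [hνae] with x hx
    rw [hw, smul_eq_mul]
    simp only
    rw [ENNReal.toReal_ofReal (Real.rpow_nonneg hx.1.le _)]
  have hq0 : q (Iio 0) = 0 := by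
    rw [hq, Measure.map_apply hTm measurableSet_Iio]
    refine measure_mono_null ?_ (ae_iff.1 hpae)
    intro x hx hx2
    have h1 := Real.log_nonpos hx2.1.le hx2.2
    have h2 : -(α * Real.log x) < 0 := hx
    nlinarith
  have hqi : Integrable (fun y => y) q := by
    rw [hq, integrable_map_measure (by fun_prop) hTm.aemeasurable, hp,
      integrable_withDensity_iff_integrable_smul' hwm hwtop]
    obtain ⟨b, hb, hbf⟩ := hβsa
    have hbi : Integrable (fun x : ℝ => x ^ b) ν := by
      refine ⟨by fun_prop, ?_⟩
      rw [hasFiniteIntegral_iff_norm]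
      refine lt_of_eq_of_lt (lintegral_congr_ae ?_) hbf
      filter_upwards [hνae] with x hx
      rw [Real.norm_eq_abs, abs_of_nonneg (Real.rpow_nonneg hx.1.le _)]
    refine (hbi.const_mul (α * (1 / (βs - b)))).mono' (by fun_prop) ?_
    filter_upwards [hνae] with x hx
    have hδ : 0 < βs - b := by linarith
    have h1 := (Real.abs_log_mul_self_rpow_lt x (βs - b) hx.1 hx.2 hδ).le
    have h2 : x ^ βs = x ^ (βs - b) * x ^ b := by
      rw [← Real.rpow_add hx.1]; congr 1; ring
    have hxb := Real.rpow_nonneg hx.1.le b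
    rw [hw]
    simp only [Function.comp, smul_eq_mul]
    rw [ENNReal.toReal_ofReal (Real.rpow_nonneg hx.1.le _), h2, hT]
    have e : x ^ (βs - b) * x ^ b * -(α * Real.log x)
      = -(α * (Real.log x * x ^ (βs - b)) * x ^ b) := by ring
    rw [e, norm_neg, norm_mul, norm_mul, Real.norm_eq_abs, Real.norm_eq_abs, Real.norm_eq_abs,
      abs_of_pos hα, abs_of_nonneg hxb]
    gcongr
  have hnl : ∀ d : ℝ, 0 < d → q {y | ∃ n : ℕ, y = n * d}ᶜ ≠ 0 := by
    intro d hd h0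
    apply hnonarith
    have hdα : 0 < d / α := by positivity
    refine ⟨Real.exp (-(d / α)), ⟨Real.exp_pos _, by rw [Real.exp_lt_one_iff]; linarith⟩, ?_⟩
    have hcount : ({y : ℝ | ∃ n : ℕ, y = n * d}).Countable := by
      have : {y : ℝ | ∃ n : ℕ, y = n * d} = range fun n : ℕ => (n:ℝ) * d := by
        ext y; simp [eq_comm]
      rw [this]; exact countable_range _
    rw [hq, Measure.map_apply hTm hcount.measurableSet.compl, hp,
      withDensity_apply_eq_zero hwm, hν, Measure.restrict_apply' measurableSet_Ioc] at h0
    refine measure_mono_null ?_ h0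
    rintro x ⟨hx, hxn⟩
    refine ⟨⟨?_, ?_⟩, hx⟩
    · have := Real.rpow_pos_of_pos hx.1 βs
      simpa [hw] using this
    · rintro ⟨n, hn⟩
      apply hxn
      refine ⟨n, ?_⟩
      rw [← Real.exp_nat_mul]
      have hn' : -(α * Real.log x) = n * d := hn
      have : (n:ℝ) * -(d / α) = Real.log x := by field_simp; linarith
      rw [this, Real.exp_log hx.1]
  have hPs : ∀ j : ℕ, RenewalAux.Ps q j = psiR σ (βs + α * j) := by
    intro j
    unfold RenewalAux.Ps RenewalAux.Lq psiR mellinR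
    rw [hIntg _ (by fun_prop)]
    congr 1
    apply integral_congr_ae
    filter_upwards [hνae] with x hx
    rw [Real.rpow_add hx.1, Real.rpow_def_of_pos hx.1 (α * j), hT]
    congr 2; ring
  have hmu : ∫ y, y ∂q = α * ∫ x in Ioc (0:ℝ) 1, (-Real.log x) * x ^ βs ∂σ := by
    rw [hIntg (fun y => y) measurable_id, ← integral_const_mul]
    congr 1; ext x
    rw [hT]; ring
  obtain ⟨c1, c2⟩ := RenewalAux.core hq0 hqi hnl
  refine ⟨fun j hj => hPs j ▸ c1 j hj, fun k hk => ?_⟩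
  have h := c2 k hk
  rw [hmu] at h
  simp_rw [hPs] at h
  refine h.congr fun t => ?_
  congr 1
  unfold RenewalAux.mm RenewalAux.EE RenewalAux.gam mSeriesR
  congr 1; ext n
  congr 1
  apply Finset.prod_congr rfl
  intro i _
  rw [hPs]; congr 1; push_cast; ring
end

section
/- Let σ be a Borel measure on (0,1] with σ({1}) < 1, let α > 0, and let β* be a real number with φ(β*) = 1 and c := ∫_{(0,1]} (−log x)·x^{β*} σ(dx) ∈ (0,∞). Define the moment sequence m_k = ((k−1)!/(α·c)) · ∏_{j=1}^{k−1} ψ(β*+αj)^{−1} for k = 1, 2, .... Then the corresponding moment problem is determinate in the following sense: if ρ₁ and ρ₂ are two probability measures on [0,∞) such that ∫_{[0,∞)} x^{αk} ρ_i(dx) = m_k for every integer k ≥ 1 and i = 1, 2, then ρ₁ = ρ₂. -/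
open MeasureTheory Set

open Filter Topology ProbabilityTheory in
lemma aux_lintegral_exp (μ : Measure ℝ) (X : ℝ → ℝ) (hX : Measurable X) (hX0 : ∀ x, 0 ≤ X x)
    (t : ℝ) (ht : 0 ≤ t) :
    ∫⁻ x, ENNReal.ofReal (Real.exp (t * X x)) ∂μ
      = ∑' k : ℕ, ENNReal.ofReal (t ^ k / k.factorial) * ∫⁻ x, ENNReal.ofReal (X x ^ k) ∂μ := by
  have h : ∀ x, ENNReal.ofReal (Real.exp (t * X x))
      = ∑' k : ℕ, ENNReal.ofReal (t ^ k / k.factorial) * ENNReal.ofReal (X x ^ k) := by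
    intro x
    rw [Real.exp_eq_exp_ℝ, NormedSpace.exp_eq_tsum_div]
    rw [ENNReal.ofReal_tsum_of_nonneg]
    · congr 1
      ext k
      rw [← ENNReal.ofReal_mul (by positivity), mul_pow]
      congr 1
      ring
    · intro k
      have := hX0 x
      positivity
    · exact NormedSpace.expSeries_div_summable (t * X x)
  simp_rw [h]
  rw [lintegral_tsum]
  · congr 1
    ext k
    rw [lintegral_const_mul]
    fun_prop
  · intro k
    fun_prop

open Filter Topology ProbabilityTheory in
lemma aux_determ (μ ν : Measure ℝ) [IsProbabilityMeasure μ] [IsProbabilityMeasure ν]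
    (X : ℝ → ℝ) (hX : Measurable X) (hX0 : ∀ x, 0 ≤ X x)
    (hm : ∀ k : ℕ, ∫⁻ x, ENNReal.ofReal (X x ^ k) ∂μ = ∫⁻ x, ENNReal.ofReal (X x ^ k) ∂ν)
    (r : ℝ) (hr : 0 < r) (hfin : ∫⁻ x, ENNReal.ofReal (Real.exp (r * X x)) ∂μ ≠ ⊤) :
    μ.map X = ν.map X := by
  have heq : ∀ t : ℝ, 0 ≤ t → ∫⁻ x, ENNReal.ofReal (Real.exp (t * X x)) ∂μ
      = ∫⁻ x, ENNReal.ofReal (Real.exp (t * X x)) ∂ν := by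
    intro t ht
    rw [aux_lintegral_exp μ X hX hX0 t ht, aux_lintegral_exp ν X hX hX0 t ht]
    simp_rw [hm]
  have hsub : ∀ (κ : Measure ℝ), ∫⁻ x, ENNReal.ofReal (Real.exp (r * X x)) ∂κ ≠ ⊤ →
      Iio r ⊆ interior (integrableExpSet X κ) := by
    intro κ hκ
    apply interior_maximal _ isOpen_Iio
    intro t ht
    have hI : Integrable (fun x => Real.exp (r * X x)) κ := by
      refine ⟨by fun_prop, ?_⟩
      rw [hasFiniteIntegral_iff_ofReal (ae_of_all _ fun x => (Real.exp_pos _).le)]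
      exact lt_top_iff_ne_top.mpr hκ
    refine Integrable.mono' hI (by fun_prop) (ae_of_all _ fun x => ?_)
    rw [Real.norm_of_nonneg (Real.exp_pos _).le]
    exact Real.exp_le_exp.mpr (mul_le_mul_of_nonneg_right (le_of_lt ht) (hX0 x))
  have hμ := hsub μ hfin
  have hν := hsub ν (by rwa [← heq r hr.le])
  have hE : EqOn (complexMGF X μ) (complexMGF X ν) {z : ℂ | z.re < r} := by
    have h1 : AnalyticOnNhd ℂ (complexMGF X μ) {z : ℂ | z.re < r} :=
      analyticOnNhd_complexMGF.mono fun z hz => hμ hz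
    have h2 : AnalyticOnNhd ℂ (complexMGF X ν) {z : ℂ | z.re < r} :=
      analyticOnNhd_complexMGF.mono fun z hz => hν hz
    refine AnalyticOnNhd.eqOn_of_preconnected_of_frequently_eq h1 h2
      (convex_halfSpace_re_lt r).isPreconnected (z₀ := ((r / 2 : ℝ) : ℂ)) ?_ ?_
    · change ((r / 2 : ℝ) : ℂ).re < r
      rw [Complex.ofReal_re]; linarith
    have h_real : ∃ᶠ (x : ℝ) in 𝓝[≠] (r / 2), complexMGF X μ x = complexMGF X ν x := by
      apply Eventually.frequently
      have : ∀ᶠ x : ℝ in 𝓝[≠] (r / 2), 0 < x :=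
        nhdsWithin_le_nhds (lt_mem_nhds (by linarith : 0 < r / 2))
      filter_upwards [this] with y hy
      rw [complexMGF_ofReal, complexMGF_ofReal, mgf, mgf,
        integral_eq_lintegral_of_nonneg_ae (ae_of_all _ fun x => (Real.exp_pos _).le)
          (by fun_prop),
        integral_eq_lintegral_of_nonneg_ae (ae_of_all _ fun x => (Real.exp_pos _).le)
          (by fun_prop), heq y hy.le]
    rw [frequently_iff_seq_forall] at h_real ⊢
    obtain ⟨xs, hx_tendsto, hx_eq⟩ := h_real
    refine ⟨fun n ↦ xs n, ?_, fun n ↦ ?_⟩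
    · rw [tendsto_nhdsWithin_iff] at hx_tendsto ⊢
      constructor
      · exact (Complex.continuous_ofReal.tendsto _).comp hx_tendsto.1
      · filter_upwards [hx_tendsto.2] with n hn h
        exact hn (Complex.ofReal_injective h)
    · simp [hx_eq]
  have : IsProbabilityMeasure (μ.map X) := Measure.isProbabilityMeasure_map hX.aemeasurable
  have : IsProbabilityMeasure (ν.map X) := Measure.isProbabilityMeasure_map hX.aemeasurable
  apply Measure.ext_of_charFun
  ext t
  rw [← complexMGF_mul_I hX.aemeasurable, ← complexMGF_mul_I hX.aemeasurable]
  apply hE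
  simpa using hr

lemma aux_psi (σ : Measure ℝ) (α : ℝ) (hα : 0 < α) (βs : ℝ)
    (hβs : ∫⁻ x in Ioc (0:ℝ) 1, ENNReal.ofReal (x ^ βs) ∂σ = 1)
    (hc : 0 < ∫ x in Ioc (0:ℝ) 1, (-Real.log x) * x ^ βs ∂σ) :
    0 < psiR σ (βs + α) ∧ ∀ j : ℕ, 1 ≤ j → psiR σ (βs + α) ≤ psiR σ (βs + α * j) := by
  have hmem : ∀ᵐ x ∂(σ.restrict (Ioc (0:ℝ) 1)), x ∈ Ioc (0:ℝ) 1 :=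
    ae_restrict_mem measurableSet_Ioc
  have hnn : ∀ b : ℝ, 0 ≤ᵐ[σ.restrict (Ioc (0:ℝ) 1)] fun x => x ^ b := fun b => by
    filter_upwards [hmem] with x hx
    exact Real.rpow_nonneg hx.1.le b
  have hI0 : Integrable (fun x : ℝ => x ^ βs) (σ.restrict (Ioc (0:ℝ) 1)) := by
    refine ⟨by fun_prop, ?_⟩
    rw [hasFiniteIntegral_iff_ofReal (hnn βs), hβs]
    simp
  have hI : ∀ b, βs ≤ b → Integrable (fun x : ℝ => x ^ b) (σ.restrict (Ioc (0:ℝ) 1)) := by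
    intro b hb
    refine Integrable.mono' hI0 (by fun_prop) ?_
    filter_upwards [hmem] with x hx
    rw [Real.norm_of_nonneg (Real.rpow_nonneg hx.1.le b)]
    exact Real.rpow_le_rpow_of_exponent_ge hx.1 hx.2 hb
  have h1 : ∫ x in Ioc (0:ℝ) 1, x ^ βs ∂σ = 1 := by
    rw [integral_eq_lintegral_of_nonneg_ae (hnn βs) (by fun_prop), hβs]
    simp
  constructor
  · have e : psiR σ (βs + α) = ∫ x in Ioc (0:ℝ) 1, (x ^ βs - x ^ (βs + α)) ∂σ := by
      rw [integral_sub hI0 (hI _ (by linarith)), h1, psiR, mellinR]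
    have hnn2 : 0 ≤ᵐ[σ.restrict (Ioc (0:ℝ) 1)] fun x => x ^ βs - x ^ (βs + α) := by
      filter_upwards [hmem] with x hx
      have := Real.rpow_le_rpow_of_exponent_ge hx.1 hx.2 (by linarith : βs ≤ βs + α)
      simpa using this
    rw [e]
    refine lt_of_le_of_ne (integral_nonneg_of_ae hnn2) fun h0 => ?_
    have h0' := (integral_eq_zero_iff_of_nonneg_ae hnn2
      (hI0.sub (hI _ (by linarith)))).mp h0.symm
    have : ∫ x in Ioc (0:ℝ) 1, (-Real.log x) * x ^ βs ∂σ = 0 := by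
      apply integral_eq_zero_of_ae
      filter_upwards [hmem, h0'] with x hx hx0
      have hp : 0 < x ^ βs := Real.rpow_pos_of_pos hx.1 _
      simp only [Pi.zero_apply, Real.rpow_add hx.1] at hx0
      have h3 : x ^ α = 1 := by
        have : x ^ βs * (1 - x ^ α) = 0 := by linarith
        rcases mul_eq_zero.mp this with h | h <;> linarith
      have h4 : α * Real.log x = 0 := by rw [← Real.log_rpow hx.1, h3, Real.log_one]
      have h5 : Real.log x = 0 := by
        rcases mul_eq_zero.mp h4 with h | h
        · exact absurd h hα.ne'
        · exact h
      simp [h5]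
    linarith
  · intro j hj
    have hj' : (1:ℝ) ≤ j := by exact_mod_cast hj
    have hle : α ≤ α * j := by nlinarith
    unfold psiR mellinR
    apply sub_le_sub_left
    apply integral_mono_ae (hI _ (by linarith)) (hI _ (by linarith))
    filter_upwards [hmem] with x hx
    exact Real.rpow_le_rpow_of_exponent_ge hx.1 hx.2 (by linarith)

lemma aux_bound (A p : ℝ) (hA : 0 ≤ A) (hp : 0 < p) (f : ℕ → ℝ)
    (hf : ∀ j, 1 ≤ j → p ≤ f j) (k : ℕ) (hk : 1 ≤ k) :
    (p / 2) ^ k / k.factorial *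
      ((((k - 1).factorial : ℝ) * A) * ∏ j ∈ Finset.Icc 1 (k - 1), (f j)⁻¹)
      ≤ (1 + A * p) * (1 / 2) ^ k := by
  obtain ⟨n, rfl⟩ : ∃ n, k = n + 1 := ⟨k - 1, by omega⟩
  simp only [Nat.add_sub_cancel]
  have hprod : ∏ j ∈ Finset.Icc 1 n, (f j)⁻¹ ≤ (p⁻¹) ^ n := by
    calc ∏ j ∈ Finset.Icc 1 n, (f j)⁻¹ ≤ ∏ j ∈ Finset.Icc 1 n, p⁻¹ := by
          apply Finset.prod_le_prod
          · intro j hj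
            have := hf j (Finset.mem_Icc.mp hj).1
            exact inv_nonneg.mpr (by linarith)
          · intro j hj
            exact inv_anti₀ hp (hf j (Finset.mem_Icc.mp hj).1)
      _ = _ := by simp
  have hfac : (n.factorial : ℝ) ≤ (n + 1).factorial := by
    exact_mod_cast Nat.factorial_le (Nat.le_succ n)
  have hfp : (0:ℝ) < (n + 1).factorial := by positivity
  calc (p / 2) ^ (n + 1) / (n + 1).factorial *
      (((n.factorial : ℝ) * A) * ∏ j ∈ Finset.Icc 1 n, (f j)⁻¹)
      ≤ (p / 2) ^ (n + 1) / (n + 1).factorial *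
      ((((n + 1).factorial : ℝ) * A) * (p⁻¹) ^ n) := by
        gcongr
        apply Finset.prod_nonneg
        intro j hj
        have := hf j (Finset.mem_Icc.mp hj).1
        exact inv_nonneg.mpr (by linarith)
    _ = (A * p) * (1 / 2) ^ (n + 1) := by
      rw [div_pow, div_pow, inv_pow]
      field_simp
      ring
    _ ≤ _ := by gcongr; linarith

/-- Suppose `σ({1}) < 1`, `α > 0`, `φ(β*) = 1` and
`c = ∫ (−log x)·x^{β*} σ(dx) ∈ (0,∞)`.  Then the moment sequence
`m_k = ((k−1)!/(αc))·∏_{j=1}^{k−1} ψ(β*+αj)⁻¹` is determinate: two probability measures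
on `[0,∞)` whose moments of orders `αk` all equal `m_k` must coincide. -/
theorem limiting_moment_problem_is_determinate
    (σ : Measure ℝ) (α : ℝ) (hα : 0 < α)
    (h1 : σ {(1:ℝ)} < 1) (βs : ℝ)
    (hβs : ∫⁻ x in Ioc (0:ℝ) 1, ENNReal.ofReal (x ^ βs) ∂σ = 1)
    (hint : IntegrableOn (fun x : ℝ => (-Real.log x) * x ^ βs) (Ioc (0:ℝ) 1) σ)
    (hc : 0 < ∫ x in Ioc (0:ℝ) 1, (-Real.log x) * x ^ βs ∂σ) :
    ∀ ρ₁ ρ₂ : Measure ℝ, IsProbabilityMeasure ρ₁ → IsProbabilityMeasure ρ₂ →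
      ρ₁ (Iio (0:ℝ)) = 0 → ρ₂ (Iio (0:ℝ)) = 0 →
      (∀ k : ℕ, 1 ≤ k →
        ∫⁻ x in Ici (0:ℝ), ENNReal.ofReal (x ^ (α * k)) ∂ρ₁
          = ENNReal.ofReal ((((k - 1).factorial : ℝ)
              / (α * ∫ x in Ioc (0:ℝ) 1, (-Real.log x) * x ^ βs ∂σ))
            * ∏ j ∈ Finset.Icc 1 (k - 1), (psiR σ (βs + α * j))⁻¹)) →
      (∀ k : ℕ, 1 ≤ k →
        ∫⁻ x in Ici (0:ℝ), ENNReal.ofReal (x ^ (α * k)) ∂ρ₂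
          = ENNReal.ofReal ((((k - 1).factorial : ℝ)
              / (α * ∫ x in Ioc (0:ℝ) 1, (-Real.log x) * x ^ βs ∂σ))
            * ∏ j ∈ Finset.Icc 1 (k - 1), (psiR σ (βs + α * j))⁻¹)) →
      ρ₁ = ρ₂ := by
  intro ρ₁ ρ₂ hρ₁ hρ₂ hz₁ hz₂ hm₁ hm₂
  obtain ⟨hp, hpj⟩ := aux_psi σ α hα βs hβs hc
  set c := ∫ x in Ioc (0:ℝ) 1, (-Real.log x) * x ^ βs ∂σ with hcdef
  set p := psiR σ (βs + α) with hpdef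
  set X : ℝ → ℝ := fun x => (max x 0) ^ α with hXdef
  have hX : Measurable X := by
    rw [hXdef]; fun_prop
  have hX0 : ∀ x, 0 ≤ X x := fun x => Real.rpow_nonneg (le_max_right _ _) _
  have hae : ∀ ρ : Measure ℝ, ρ (Iio (0:ℝ)) = 0 → ∀ᵐ x ∂ρ, x ∈ Ici (0:ℝ) := by
    intro ρ h
    rw [ae_iff]
    convert h using 2
    ext x; simp
  have hmom : ∀ ρ : Measure ℝ, ρ (Iio (0:ℝ)) = 0 → ∀ k : ℕ,
      ∫⁻ x, ENNReal.ofReal (X x ^ k) ∂ρ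
        = ∫⁻ x in Ici (0:ℝ), ENNReal.ofReal (x ^ (α * k)) ∂ρ := by
    intro ρ h k
    rw [Measure.restrict_eq_self_of_ae_mem (hae ρ h)]
    apply lintegral_congr_ae
    filter_upwards [hae ρ h] with x hx
    have hx' : (0:ℝ) ≤ x := hx
    simp only [hXdef, max_eq_left hx', Real.rpow_mul hx', Real.rpow_natCast]
  have hmom0 : ∀ ρ : Measure ℝ, IsProbabilityMeasure ρ →
      ∫⁻ x, ENNReal.ofReal (X x ^ 0) ∂ρ = 1 := by
    intro ρ h
    simp
  have hmap : ρ₁.map X = ρ₂.map X := by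
    refine aux_determ ρ₁ ρ₂ X hX hX0 ?_ (p / 2) (by linarith) ?_
    · intro k
      rcases Nat.eq_zero_or_pos k with rfl | hk
      · rw [hmom0 ρ₁ hρ₁, hmom0 ρ₂ hρ₂]
      · rw [hmom ρ₁ hz₁, hmom ρ₂ hz₂, hm₁ k hk, hm₂ k hk]
    · rw [aux_lintegral_exp ρ₁ X hX hX0 _ (by linarith)]
      have hA : 0 ≤ 1 / (α * c) := by positivity
      have hle : ∀ k : ℕ, ENNReal.ofReal ((p / 2) ^ k / k.factorial)
          * ∫⁻ x, ENNReal.ofReal (X x ^ k) ∂ρ₁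
          ≤ ENNReal.ofReal ((1 + 1 / (α * c) * p) * (1 / 2) ^ k) := by
        intro k
        rcases Nat.eq_zero_or_pos k with rfl | hk
        · rw [hmom0 ρ₁ hρ₁, mul_one]
          apply ENNReal.ofReal_le_ofReal
          have : 0 ≤ 1 / (α * c) * p := by positivity
          simp only [pow_zero, Nat.factorial_zero, Nat.cast_one, div_one, mul_one]
          linarith
        · rw [hmom ρ₁ hz₁, hm₁ k hk, ← ENNReal.ofReal_mul (by positivity)]
          apply ENNReal.ofReal_le_ofReal
          have := aux_bound (1 / (α * c)) p hA hp (fun j => psiR σ (βs + α * j)) hpj k hk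
          rw [mul_one_div] at this
          exact this
      refine ne_top_of_le_ne_top ?_ (ENNReal.tsum_le_tsum hle)
      have hs : Summable fun k : ℕ => (1 + 1 / (α * c) * p) * (1 / 2 : ℝ) ^ k :=
        summable_geometric_two.mul_left _
      rw [← ENNReal.ofReal_tsum_of_nonneg (fun k => by positivity) hs]
      exact ENNReal.ofReal_ne_top
  have hback : ∀ ρ : Measure ℝ, ρ (Iio (0:ℝ)) = 0 →
      (ρ.map X).map (fun y => y ^ (α⁻¹)) = ρ := by
    intro ρ h
    rw [Measure.map_map (by fun_prop) hX]
    conv_rhs => rw [← Measure.map_id (μ := ρ)]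
    apply Measure.map_congr
    filter_upwards [hae ρ h] with x hx
    have hx' : (0:ℝ) ≤ x := hx
    simp only [Function.comp, hXdef, max_eq_left hx', id]
    exact Real.rpow_rpow_inv hx' hα.ne'
  rw [← hback ρ₁ hz₁, ← hback ρ₂ hz₂, hmap]
end
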